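/- arXiv:2003.13940 — 2 statements merged into one kernel-verified Lean document; each statement's English description precedes it below -/
import Mathlib

section
/- Let φ be an injective endomorphism of the free group F_n with n ≤ 2 and tr(φ^{ab}) > 1. Then there exists c ∈ F_n such that rk(fix(i_c ∘ φ)) + a(i_c ∘ φ) > 1. -/
/-!
The free group `F` acts on itself by the twisted action `g · v = g v φ(g)⁻¹`. Joining `w` to `i · w`
for every generator `i` gives a graph. The component of `u` is the twisted orbit of `u`, and its
fundamental group is the stabilizer of `u`, which is exactly the fixed subgroup of `i_u ∘ φ`
(`mem_fixed_iff`).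

On this graph lives the Goldstein–Turner flow: a vertex `v ≠ 1` with first letter `x` moves along
the edge labelled `x`, to `x⁻¹ v φ(x)`. The edges not used by the flow correspond to occurrences of
`i` in `φ(i)` (`suffix_of_unflowed`, `unflowed_of_suffix`), and the edges used in both directions to
occurrences of `i⁻¹` in `φ(i)` (`suffix_of_dead`). So a trace of at least two means that there are
at least two more unused edges than edges used twice. Each component of the flow contains the
vertex `1`, or an edge used twice, or a genuine cycle, or an infinite ray (`ray_or_periodic`).
By the pigeonhole principle, some twisted orbit has more unused edges than flow components of the
first two kinds (`exists_orbit`); `c` is taken to be any vertex `u` of such an orbit.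

Contracting the flow components of this orbit gives a connected graph with finitely many vertices
whose edges are the unused edges and one loop for each cycle. Its first Betti number is at most the
rank of the stabilizer of `u`. This is proved with cochains: a cochain on these edges is determined
by its values on generators of the stabilizer and on paths from `u` to the other flow components
(`card_edges_le`, using `potential_flow`). Counting vertices and edges gives that the rank plus the
number of flow components containing rays is at least two (`exists_rays`).

Finally, each flow component containing an infinite ray produces an
attracting fixed word of `i_u ∘ φ`, and distinct components produce inequivalent words
(`card_le_aCard`). Starting the ray at a vertex of minimal length makes the path to it followed by
the ray a reduced infinite word `W`; along the ray the vertices `v_j = W_i⁻¹ u φ(W_i)` become long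
and start with a long piece of the rest of `W`, which says that `W` is attracting.
-/

open Filter

namespace ZZFix

/-- A letter: a basis element together with a sign. -/
abbrev Letter (α : Type*) := α × Bool

/-- The inverse letter. -/
def linv {α : Type*} (l : Letter α) : Letter α := (l.1, !l.2)

/-- An infinite reduced word: a sequence of letters with no adjacent cancellation. -/
def InfWord (α : Type*) : Type _ := {w : ℕ → Letter α // ∀ i, w (i + 1) ≠ linv (w i)}

/-- The length-`i` prefix of an infinite reduced word, as a list of letters. -/
def prefixList {α : Type*} (W : InfWord α) (i : ℕ) : List (Letter α) :=
  (List.range i).map W.1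

/-- The length-`i` prefix of an infinite reduced word, as an element of the free group. -/
def wordPrefix {α : Type*} (W : InfWord α) (i : ℕ) : FreeGroup α :=
  FreeGroup.mk (prefixList W i)

/-- Length of the longest common prefix of two lists. -/
def commonPrefixLength {β : Type*} [DecidableEq β] : List β → List β → ℕ
  | a :: as, b :: bs => if a = b then commonPrefixLength as bs + 1 else 0
  | _, _ => 0

variable {α : Type*} [DecidableEq α]

/-- `|W ∧ g|` for an infinite reduced word `W` and a finite reduced word `g`. -/
def wedgeF (W : InfWord α) (g : FreeGroup α) : ℕ :=
  commonPrefixLength (prefixList W (FreeGroup.toWord g).length) (FreeGroup.toWord g)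

/-- `|g ∧ h|` for finite reduced words. -/
def wedgeFF (g h : FreeGroup α) : ℕ :=
  commonPrefixLength (FreeGroup.toWord g) (FreeGroup.toWord h)

/-- `|W ∧ V|` for infinite reduced words, valued in `ℕ∞` (it is `⊤` iff `W = V`). -/
noncomputable def wedgeI {α : Type*} (W V : InfWord α) : ℕ∞ :=
  sSup ((fun i : ℕ => (i : ℕ∞)) '' {i : ℕ | prefixList W i = prefixList V i})

/-- A sequence of group elements converges to the infinite reduced word `W`
(in the initial segment metric on `F ⊔ ∂F`). -/
def ConvergesTo (u : ℕ → FreeGroup α) (W : InfWord α) : Prop :=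
  Tendsto (fun i => wedgeF W (u i)) atTop atTop

/-- `W` is a fixed infinite word of `φ`: `|W ∧ φ(W_i)| → ∞`. -/
def IsFixedInfWord (φ : FreeGroup α →* FreeGroup α) (W : InfWord α) : Prop :=
  Tendsto (fun i => wedgeF W (φ (wordPrefix W i))) atTop atTop

/-- `W` is an attracting fixed word of `φ`: it is fixed and `|W ∧ φ(W_i)| - i → +∞`. -/
def IsAttractingFixedWord (φ : FreeGroup α →* FreeGroup α) (W : InfWord α) : Prop :=
  IsFixedInfWord φ W ∧
    Tendsto (fun i => (wedgeF W (φ (wordPrefix W i)) : ℤ) - (i : ℤ)) atTop atTop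

/-- The fixed subgroup of an endomorphism. -/
def fixedSubgroup {G : Type*} [Group G] (φ : G →* G) : Subgroup G where
  carrier := {g | φ g = g}
  one_mem' := map_one φ
  mul_mem' := by
    intro a b ha hb
    simp only [Set.mem_setOf_eq] at *
    rw [map_mul, ha, hb]
  inv_mem' := by
    intro a ha
    simp only [Set.mem_setOf_eq] at *
    rw [map_inv, ha]

/-- The rank (minimal number of generators) of a subgroup, valued in `ℕ∞`. -/
noncomputable def grpRank {G : Type*} [Group G] (H : Subgroup G) : ℕ∞ :=
  sInf {k : ℕ∞ | ∃ S : Finset G, Subgroup.closure (S : Set G) = H ∧ (S.card : ℕ∞) = k}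

/-- Two infinite reduced words are equivalent (w.r.t. `φ`) if `W' = U·W` for some
`U ∈ fix(φ)`, i.e. the reduced products `U·W_i` converge to `W'`. -/
def EquivFixedWords (φ : FreeGroup α →* FreeGroup α) (W W' : InfWord α) : Prop :=
  ∃ U ∈ fixedSubgroup φ, ConvergesTo (fun i => U * wordPrefix W i) W'

/-- `a(φ)`: the number of equivalence classes of attracting fixed words, in `ℕ∞`. -/
noncomputable def aCard (φ : FreeGroup α →* FreeGroup α) : ℕ∞ :=
  ENat.card (Quot fun (W W' : {W : InfWord α // IsAttractingFixedWord φ W}) =>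
    EquivFixedWords φ W.1 W'.1)

/-- The inner automorphism `i_c : g ↦ c g c⁻¹`, as a monoid homomorphism. -/
def innerAut {G : Type*} [Group G] (c : G) : G →* G := (MulAut.conj c).toMonoidHom

/-- Two endomorphisms are similar if `ψ₂ = i_c ∘ ψ₁ ∘ i_c⁻¹` for some `c`. -/
def Similar {G : Type*} [Group G] (ψ₁ ψ₂ : G →* G) : Prop :=
  ∃ c : G, ψ₂ = ((innerAut c).comp ψ₁).comp (innerAut c⁻¹)

/-- The trace of the endomorphism of `ℤⁿ` induced by `φ` on the abelianization. -/
def abTrace {n : ℕ} (φ : FreeGroup (Fin n) →* FreeGroup (Fin n)) : ℤ :=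
  ∑ i : Fin n, Multiplicative.toAdd
    ((FreeGroup.lift fun k => Multiplicative.ofAdd (if k = i then (1 : ℤ) else 0))
      (φ (FreeGroup.of i)))

/-- The constant infinite reduced word `l l l ⋯`. -/
def constWord {α : Type*} (l : Letter α) : InfWord α :=
  ⟨fun _ => l, fun _ h => by
    have h2 := congrArg Prod.snd h
    simp [linv] at h2⟩

/-- `W` is an attracting fixed point of `φ`: it is fixed, and there is `i₀` such that
every finite or infinite reduced word `V` with `|W ∧ V| ≥ i₀` satisfies
`|W ∧ φᵖ(V)| → ∞` as `p → ∞`. -/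
def IsAttractingFixedPoint (φ : FreeGroup α →* FreeGroup α) (W : InfWord α) : Prop :=
  IsFixedInfWord φ W ∧
    ∃ i₀ : ℕ,
      (∀ g : FreeGroup α, i₀ ≤ wedgeF W g →
        Tendsto (fun p => wedgeF W ((⇑φ)^[p] g)) atTop atTop) ∧
      (∀ V : InfWord α, (i₀ : ℕ∞) ≤ wedgeI W V →
        ∀ Vs : ℕ → InfWord α, Vs 0 = V →
          (∀ p, ConvergesTo (fun i => φ (wordPrefix (Vs p) i)) (Vs (p + 1))) →
          Tendsto (fun p => wedgeI W (Vs p)) atTop atTop)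

open scoped Classical in
/-- The initial segment metric. -/
noncomputable def distIS {α : Type*} (W V : InfWord α) : ℝ :=
  if W = V then 0 else 1 / (1 + ((wedgeI W V).toNat : ℝ))



/-! ### Cancellation in products of reduced words -/

set_option linter.unusedSectionVars false

section Words

open FreeGroup

theorem linv_linv (x : Letter α) : linv (linv x) = x := by
  simp [linv]

theorem linv_ne (x : Letter α) : linv x ≠ x := by
  intro h
  have h2 := congrArg Prod.snd h
  simp [linv] at h2

theorem reducedRel_iff (a b : Letter α) : (a.1 = b.1 → a.2 = b.2) ↔ b ≠ linv a := by
  obtain ⟨a1, a2⟩ := a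
  obtain ⟨b1, b2⟩ := b
  cases a2 <;> cases b2 <;> simp [linv, eq_comm]

theorem invRev_cons_eq (x : Letter α) (s : List (Letter α)) :
    invRev (x :: s) = invRev s ++ [linv x] := by
  rw [invRev_cons]; rfl

theorem mk_linv (x : Letter α) : (FreeGroup.mk [linv x]) = (FreeGroup.mk [x])⁻¹ := by
  rw [inv_mk]; rfl

theorem mk_cons (x : Letter α) (s : List (Letter α)) :
    FreeGroup.mk (x :: s) = FreeGroup.mk [x] * FreeGroup.mk s := by
  rw [mul_mk]; rfl

theorem isReduced_of_subword {s l : List (Letter α)} (h : IsReduced l) (hs : s <:+: l) :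
    IsReduced s := by
  obtain ⟨p, q, rfl⟩ := hs
  exact (List.IsChain.left_of_append h).right_of_append

/-- The maximal cancellation between two reduced lists. -/
theorem exists_cancel_list (A B : List (Letter α)) (hA : IsReduced A) (hB : IsReduced B) :
    ∃ p s t, A = p ++ s ∧ B = invRev s ++ t ∧ IsReduced (p ++ t) := by
  induction A using List.reverseRecOn generalizing B with
  | nil => exact ⟨[], [], B, by simp, by simp, by simpa using hB⟩
  | append_singleton A x ih =>
    by_cases h : B.head? = some (linv x)
    · obtain ⟨B', rfl⟩ : ∃ B', B = linv x :: B' := by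
        cases B with
        | nil => simp at h
        | cons b B' => exact ⟨B', by simp at h; rw [h]⟩
      obtain ⟨p, s, t, h1, h2, h3⟩ := ih B' (isReduced_of_subword hA ⟨[], [x], by simp⟩)
        (isReduced_of_subword hB ⟨[linv x], [], by simp⟩)
      refine ⟨p, s ++ [x], t, by simp [h1], ?_, h3⟩
      rw [invRev_append, h2]; rfl
    · refine ⟨A ++ [x], [], B, by simp, by simp, ?_⟩
      refine List.IsChain.append hA hB ?_
      intro a ha b hb
      simp only [List.getLast?_append, List.getLast?_singleton, Option.some_or, Option.mem_def,
        Option.some.injEq] at ha hb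
      subst ha
      rw [reducedRel_iff]
      rintro rfl
      exact h hb

/-- In a product `g * h` of reduced words, a suffix of `g` cancels against a prefix of `h`. -/
theorem exists_cancel (g h : FreeGroup α) :
    ∃ p s t, g.toWord = p ++ s ∧ h.toWord = invRev s ++ t ∧ (g * h).toWord = p ++ t := by
  obtain ⟨p, s, t, h1, h2, h3⟩ := exists_cancel_list g.toWord h.toWord isReduced_toWord
    isReduced_toWord
  refine ⟨p, s, t, h1, h2, ?_⟩
  rw [← h3.reduce_eq, ← toWord_mk]
  congr 1
  conv_lhs => rw [← mk_toWord (x := g), ← mk_toWord (x := h), h1, h2]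
  simp only [← mul_mk, ← inv_mk]
  group

theorem toWord_mk_of_isReduced {s : List (Letter α)} (h : IsReduced s) :
    (FreeGroup.mk s).toWord = s := by
  rw [toWord_mk, h.reduce_eq]

theorem isReduced_of_cons {v : FreeGroup α} {x : Letter α} {s : List (Letter α)}
    (h : v.toWord = x :: s) : IsReduced s := by
  have : IsReduced v.toWord := isReduced_toWord
  rw [h] at this
  exact isReduced_of_subword this ⟨[x], [], by simp⟩

theorem head_ne_of_cons {v : FreeGroup α} {x : Letter α} {s : List (Letter α)}
    (h : v.toWord = x :: s) : s.head? ≠ some (linv x) := by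
  have h1 : IsReduced v.toWord := isReduced_toWord
  rw [h] at h1
  cases s with
  | nil => simp
  | cons y s =>
    rw [isReduced_cons_cons, reducedRel_iff] at h1
    simpa using h1.1

theorem isReduced_cons_of_head {x : Letter α} {s : List (Letter α)} (hs : IsReduced s)
    (h : s.head? ≠ some (linv x)) : IsReduced (x :: s) := by
  cases s with
  | nil => simp
  | cons y s =>
    rw [isReduced_cons_cons, reducedRel_iff]
    exact ⟨by simpa using h, hs⟩

/-- Left multiplication by a letter that does not cancel. -/
theorem toWord_letter_mul {x : Letter α} {v : FreeGroup α} (h : v.toWord.head? ≠ some (linv x)) :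
    (FreeGroup.mk [x] * v).toWord = x :: v.toWord := by
  rw [← toWord_mk_of_isReduced (isReduced_cons_of_head isReduced_toWord h), mk_cons x v.toWord,
    mk_toWord]

theorem eq_letter_mul {v : FreeGroup α} {x : Letter α} {s : List (Letter α)}
    (h : v.toWord = x :: s) : v = FreeGroup.mk [x] * FreeGroup.mk s := by
  rw [← mk_cons, ← h, mk_toWord]

/-- Right multiplication by `h` changes at most the last `|h|` letters. -/
theorem take_toWord_mul (g h : FreeGroup α) (N : ℕ) (hN : N + h.norm ≤ g.norm) :
    (g * h).toWord.take N = g.toWord.take N ∧ N ≤ (g * h).norm := by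
  obtain ⟨p, s, t, h1, h2, h3⟩ := exists_cancel g h
  have hp : N ≤ p.length := by
    have e1 := congrArg List.length h1
    have e2 := congrArg List.length h2
    simp only [List.length_append, invRev_length, FreeGroup.norm] at e1 e2 hN
    omega
  rw [h3, h1, List.take_append_of_le_length hp, List.take_append_of_le_length hp]
  refine ⟨rfl, ?_⟩
  simp only [FreeGroup.norm, h3, List.length_append]
  omega

/-- Left multiplication by `U` does not see letters far from the beginning. -/
theorem toWord_mul_append (U : FreeGroup α) (q r : List (Letter α)) (hqr : IsReduced (q ++ r))
    (hq : U.norm < q.length) :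
    (U * FreeGroup.mk (q ++ r)).toWord = (U * FreeGroup.mk q).toWord ++ r := by
  have hqred : IsReduced q := isReduced_of_subword hqr ⟨[], r, by simp⟩
  obtain ⟨p, s, t, h1, h2, h3⟩ := exists_cancel U (FreeGroup.mk q)
  rw [toWord_mk_of_isReduced hqred] at h2
  have ht : t ≠ [] := by
    rintro rfl
    have e1 := congrArg List.length h1
    have e2 := congrArg List.length h2
    simp only [List.length_append, invRev_length, FreeGroup.norm, List.length_nil] at e1 e2 hq
    omega
  have hred : IsReduced (p ++ t ++ r) := by
    refine IsReduced.append_overlap ?_ ?_ ht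
    · rw [← h3]; exact isReduced_toWord
    · exact isReduced_of_subword hqr ⟨invRev s, [], by simp [h2]⟩
  rw [h3, ← hred.reduce_eq, ← toWord_mk, ← mul_mk, ← mul_mk, ← h3, mk_toWord, mul_assoc]

end Words

/-! ### The twisted action and the flow on vertices -/

section Flow

open FreeGroup

variable (φ : FreeGroup α →* FreeGroup α)

/-- The twisted action `g · v = g v φ(g)⁻¹` of the free group on itself. -/
def tw (g v : FreeGroup α) : FreeGroup α := g * v * (φ g)⁻¹

@[simp] theorem tw_one (v : FreeGroup α) : tw φ 1 v = v := by simp [tw]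

theorem tw_mul (g h v : FreeGroup α) : tw φ (g * h) v = tw φ g (tw φ h v) := by
  simp [tw, mul_assoc]

theorem tw_inv_tw (g v : FreeGroup α) : tw φ g⁻¹ (tw φ g v) = v := by
  rw [← tw_mul]; simp

theorem tw_tw_inv (g v : FreeGroup α) : tw φ g (tw φ g⁻¹ v) = v := by
  rw [← tw_mul]; simp

/-- One step of the Goldstein–Turner flow: a nontrivial vertex `v = x v'` (with first letter `x`)
moves along the edge labelled `x`, to `x⁻¹ v φ(x)`; the vertex `1` does not move. -/
def flow (v : FreeGroup α) : FreeGroup α :=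
  match v.toWord with
  | [] => 1
  | x :: _ => tw φ (FreeGroup.mk [linv x]) v

theorem flow_one : flow φ 1 = 1 := by simp [flow]

variable {φ}

theorem flow_eq_tw {v : FreeGroup α} {x : Letter α} {s : List (Letter α)}
    (h : v.toWord = x :: s) : flow φ v = tw φ (FreeGroup.mk [linv x]) v := by
  simp [flow, h]

theorem flow_eq {v : FreeGroup α} {x : Letter α} {s : List (Letter α)}
    (h : v.toWord = x :: s) : flow φ v = FreeGroup.mk s * φ (FreeGroup.mk [x]) := by
  rw [flow_eq_tw h, tw, mk_linv]
  conv_lhs => rw [eq_letter_mul h]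
  rw [_root_.map_inv]
  group

/-- If the flow crosses an edge in both directions, its endpoints are exchanged by the flow. -/
theorem flow_flow_of_dead {v : FreeGroup α} {x : Letter α} {s : List (Letter α)}
    (h : v.toWord = x :: s) (hd : (flow φ v).toWord.head? = some (linv x)) :
    flow φ (flow φ v) = v := by
  obtain ⟨s', hs'⟩ := List.head?_eq_some_iff.1 hd
  rw [flow_eq_tw hs', flow_eq_tw h, linv_linv, mk_linv, tw_tw_inv]

/-- An edge crossed by the flow in neither direction comes from an occurrence of `i` in `φ(i)`. -/
theorem suffix_of_unflowed {i : α} {w : FreeGroup α} (h1 : w.toWord.head? ≠ some (i, false))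
    (h2 : (tw φ (of i) w).toWord.head? ≠ some (i, true)) :
    (i, true) :: w.toWord <:+ (φ (of i)).toWord := by
  have e : (of i * w).toWord = (i, true) :: w.toWord :=
    toWord_letter_mul (x := (i, true)) (by simpa [linv] using h1)
  obtain ⟨p, s, t, k1, k2, k3⟩ := exists_cancel (of i * w) (φ (of i))⁻¹
  rw [e] at k1
  change (tw φ (of i) w).toWord = _ at k3
  cases p with
  | cons a p =>
    simp only [List.cons_append, List.cons.injEq] at k1
    rw [k3, ← k1.1] at h2
    simp at h2
  | nil =>
    rw [k1, List.nil_append]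
    rw [toWord_inv] at k2
    have := congrArg invRev k2
    rw [invRev_invRev, invRev_append, invRev_invRev] at this
    exact ⟨_, this.symm⟩

/-- An occurrence of `i` in `φ(i)` gives an edge crossed by the flow in neither direction. -/
theorem unflowed_of_suffix {i : α} {w : FreeGroup α}
    (h : (i, true) :: w.toWord <:+ (φ (of i)).toWord) :
    w.toWord.head? ≠ some (i, false) ∧ (tw φ (of i) w).toWord.head? ≠ some (i, true) := by
  obtain ⟨r, hr⟩ := h
  have hred : IsReduced (φ (of i)).toWord := isReduced_toWord
  rw [← hr] at hred
  constructor
  · have h1 : IsReduced ((i, true) :: w.toWord) := isReduced_of_subword hred ⟨r, [], by simp⟩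
    have := head_ne_of_cons (toWord_mk_of_isReduced h1)
    simpa [linv] using this
  · have h1 : IsReduced (r ++ [(i, true)]) := isReduced_of_subword hred ⟨[], w.toWord, by simp⟩
    have h2 : IsReduced ((i, false) :: invRev r) := by
      have : IsReduced ((FreeGroup.mk (r ++ [(i, true)]))⁻¹).toWord := isReduced_toWord
      rw [toWord_inv, toWord_mk_of_isReduced h1, invRev_append] at this
      exact this
    have h3 := head_ne_of_cons (toWord_mk_of_isReduced h2)
    have h4 : tw φ (of i) w = FreeGroup.mk (invRev r) := by
      rw [tw, ← mk_toWord (x := φ (of i)), ← hr, ← mul_mk, mk_cons, mk_toWord, ← inv_mk]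
      change of i * w * (_ * (of i * w))⁻¹ = _
      group
    rw [h4, toWord_mk_of_isReduced (isReduced_of_cons (toWord_mk_of_isReduced h2))]
    simpa [linv] using h3

/-- An edge crossed by the flow in both directions comes from an occurrence of `i⁻¹` in `φ(i)`. -/
theorem suffix_of_dead {i : α} {w : FreeGroup α} (h1 : w.toWord.head? = some (i, false))
    (h2 : (tw φ (of i) w).toWord.head? = some (i, true)) :
    w.toWord <:+ (φ (of i)).toWord := by
  obtain ⟨w', hw'⟩ := List.head?_eq_some_iff.1 h1
  have hn := head_ne_of_cons hw'
  have e : of i * w = FreeGroup.mk w' := by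
    rw [eq_letter_mul hw']
    change _ * ((of i)⁻¹ * _) = _
    group
  obtain ⟨p, s, t, k1, k2, k3⟩ := exists_cancel (FreeGroup.mk w') (φ (of i))⁻¹
  rw [toWord_mk_of_isReduced (isReduced_of_cons hw')] at k1
  rw [← e] at k3
  change (tw φ (of i) w).toWord = _ at k3
  cases p with
  | cons a p =>
    rw [k3] at h2
    rw [k1] at hn
    simp only [List.cons_append, List.head?_cons, Option.some.injEq] at h2 hn
    exact absurd (by rw [h2]; rfl) hn
  | nil =>
    rw [List.nil_append] at k1 k3
    rw [k3] at h2
    obtain ⟨t', ht'⟩ := List.head?_eq_some_iff.1 h2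
    rw [toWord_inv, ← k1, ht'] at k2
    have := congrArg invRev k2
    rw [invRev_invRev, invRev_append, invRev_invRev, invRev_cons_eq] at this
    rw [hw', this]
    exact ⟨invRev t', by simp [linv]⟩

end Flow

/-! ### Counting occurrences -/

section Counting

open FreeGroup

/-- Occurrences of a letter in a list are counted by the suffixes which start with it. -/
theorem exists_suffixes {β : Type*} [BEq β] [LawfulBEq β] (x : β) (A : List β) :
    ∃ T : Finset (List β), (∀ s, s ∈ T ↔ s <:+ A ∧ s.head? = some x) ∧ T.card = A.count x := by
  classical
  induction A with
  | nil =>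
    refine ⟨∅, fun s => ?_, by simp⟩
    constructor
    · simp
    · rintro ⟨h1, h2⟩
      rw [List.suffix_nil] at h1
      simp [h1] at h2
  | cons a A ih =>
    obtain ⟨T, hT, hc⟩ := ih
    by_cases hax : a = x
    · refine ⟨insert (a :: A) T, fun s => ?_, ?_⟩
      · rw [Finset.mem_insert, hT, List.suffix_cons_iff]
        constructor
        · rintro (h | ⟨h1, h2⟩)
          · exact ⟨Or.inl h, by simp [h, hax]⟩
          · exact ⟨Or.inr h1, h2⟩
        · rintro ⟨h1 | h1, h2⟩
          · exact Or.inl h1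
          · exact Or.inr ⟨h1, h2⟩
      · rw [Finset.card_insert_of_notMem, hc, hax, List.count_cons_self]
        intro h
        have := ((hT _).1 h).1.length_le
        simp at this
    · refine ⟨T, fun s => ?_, ?_⟩
      · rw [hT, List.suffix_cons_iff]
        constructor
        · rintro ⟨h1, h2⟩
          exact ⟨Or.inr h1, h2⟩
        · rintro ⟨h1 | h1, h2⟩
          · rw [h1] at h2
            simp [hax] at h2
          · exact ⟨h1, h2⟩
      · rw [hc, List.count_cons_of_ne hax]

variable (φ : FreeGroup α →* FreeGroup α)

theorem exists_posOcc [Fintype α] : ∃ P : Finset (α × FreeGroup α),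
    (∀ i w, (i, w) ∈ P ↔ (i, true) :: w.toWord <:+ (φ (of i)).toWord) ∧
      P.card = ∑ i, (φ (of i)).toWord.count (i, true) := by
  choose T hT hc using fun i : α => exists_suffixes (i, true) (φ (of i)).toWord
  have hred : ∀ i, ∀ l ∈ T i, ∃ w : FreeGroup α, l = (i, true) :: w.toWord := by
    intro i l hl
    obtain ⟨h1, h2⟩ := (hT i l).1 hl
    obtain ⟨l', rfl⟩ := List.head?_eq_some_iff.1 h2
    have h3 : IsReduced l' := isReduced_of_subword (isReduced_toWord (x := φ (of i)))
      ((List.suffix_cons _ _).trans h1).isInfix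
    exact ⟨FreeGroup.mk l', by rw [toWord_mk_of_isReduced h3]⟩
  refine ⟨Finset.univ.biUnion fun i => (T i).image fun l => (i, FreeGroup.mk l.tail), ?_, ?_⟩
  · intro i w
    simp only [Finset.mem_biUnion, Finset.mem_univ, true_and, Finset.mem_image, Prod.mk.injEq]
    constructor
    · rintro ⟨j, l, hl, rfl, rfl⟩
      obtain ⟨w, rfl⟩ := hred _ l hl
      simpa [mk_toWord] using ((hT _ _).1 hl).1
    · intro h
      exact ⟨i, (i, true) :: w.toWord, (hT _ _).2 ⟨h, rfl⟩, rfl, by simp [mk_toWord]⟩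
  · rw [Finset.card_biUnion]
    · refine Finset.sum_congr rfl fun i _ => ?_
      rw [Finset.card_image_of_injOn, hc]
      intro l hl l' hl' h
      obtain ⟨w, rfl⟩ := hred i l hl
      obtain ⟨w', rfl⟩ := hred i l' hl'
      simp only [List.tail_cons, mk_toWord, Prod.mk.injEq, true_and] at h
      rw [h]
    · intro i _ j _ hij
      rw [Function.onFun, Finset.disjoint_left]
      simp only [Finset.mem_image, not_exists, not_and]
      rintro _ ⟨l, _, rfl⟩ l' _ h
      exact hij (Prod.ext_iff.1 h).1.symm

theorem exists_negOcc [Fintype α] : ∃ N : Finset (α × FreeGroup α),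
    (∀ i w, w.toWord.head? = some (i, false) → w.toWord <:+ (φ (of i)).toWord → (i, w) ∈ N) ∧
      N.card ≤ ∑ i, (φ (of i)).toWord.count (i, false) := by
  choose T hT hc using fun i : α => exists_suffixes (i, false) (φ (of i)).toWord
  refine ⟨Finset.univ.biUnion fun i => (T i).image fun l => (i, FreeGroup.mk l), ?_, ?_⟩
  · intro i w h1 h2
    simp only [Finset.mem_biUnion, Finset.mem_univ, true_and, Finset.mem_image, Prod.mk.injEq]
    exact ⟨i, w.toWord, (hT _ _).2 ⟨h2, h1⟩, rfl, mk_toWord⟩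
  · refine Finset.card_biUnion_le.trans (Finset.sum_le_sum fun i _ => ?_)
    exact Finset.card_image_le.trans (hc i).le

theorem lift_eq_count (i : α) (L : List (Letter α)) :
    Multiplicative.toAdd ((FreeGroup.lift fun k => Multiplicative.ofAdd
      (if k = i then (1 : ℤ) else 0)) (FreeGroup.mk L)) =
      (L.count (i, true) : ℤ) - L.count (i, false) := by
  induction L with
  | nil => simp [← one_eq_mk]
  | cons x L ih =>
    rw [mk_cons, _root_.map_mul, toAdd_mul, ih]
    obtain ⟨k, b⟩ := x
    have hk : Multiplicative.toAdd ((FreeGroup.lift fun k => Multiplicative.ofAdd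
      (if k = i then (1 : ℤ) else 0)) (FreeGroup.mk [(k, b)])) =
        if k = i then (if b then 1 else -1) else 0 := by
      cases b
      · have : FreeGroup.mk [(k, false)] = (of k)⁻¹ := rfl
        rw [this, _root_.map_inv, lift_apply_of]
        split_ifs <;> simp_all
      · have : FreeGroup.mk [(k, true)] = of k := rfl
        rw [this, lift_apply_of]
        split_ifs <;> simp_all
    rw [hk]
    by_cases h : k = i
    · subst h
      cases b <;> simp <;> ring
    · simp [h]

end Counting

/-! ### Prefixes of infinite words -/

section InfWords

open FreeGroup

theorem le_commonPrefixLength {β : Type*} [DecidableEq β] (A B : List β) (N : ℕ) :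
    N ≤ commonPrefixLength A B ↔ N ≤ A.length ∧ N ≤ B.length ∧ A.take N = B.take N := by
  induction A generalizing B N with
  | nil => cases B <;> simp +contextual [commonPrefixLength]
  | cons a A ih =>
    cases B with
    | nil => simp +contextual [commonPrefixLength]
    | cons b B =>
      cases N with
      | zero => simp
      | succ N =>
        by_cases h : a = b
        · simp [commonPrefixLength, h, ih]
        · simp [commonPrefixLength, h]

@[simp] theorem length_prefixList (W : InfWord α) (i : ℕ) : (prefixList W i).length = i := by
  simp [prefixList]

theorem prefixList_add (W : InfWord α) (i j : ℕ) :
    prefixList W (i + j) = prefixList W i ++ (List.range j).map fun k => W.1 (i + k) := by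
  simp [prefixList, List.range_add, Function.comp_def]

theorem isReduced_prefixList (W : InfWord α) (i : ℕ) : IsReduced (prefixList W i) := by
  rw [FreeGroup.IsReduced, List.isChain_iff_getElem]
  intro j hj
  rw [reducedRel_iff]
  simpa [prefixList] using W.2 j

theorem toWord_wordPrefix (W : InfWord α) (i : ℕ) :
    (wordPrefix W i).toWord = prefixList W i :=
  toWord_mk_of_isReduced (isReduced_prefixList W i)

theorem le_wedgeF (W : InfWord α) (g : FreeGroup α) (N : ℕ) :
    N ≤ wedgeF W g ↔ N ≤ g.norm ∧ g.toWord.take N = prefixList W N := by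
  rw [wedgeF, le_commonPrefixLength, length_prefixList]
  constructor
  · rintro ⟨h1, -, h2⟩
    obtain ⟨d, hd⟩ := Nat.exists_eq_add_of_le h1
    refine ⟨h1, ?_⟩
    rw [← h2, hd, prefixList_add, List.take_append_of_le_length (by simp),
      List.take_of_length_le (by simp)]
  · rintro ⟨h1, h2⟩
    refine ⟨h1, h1, ?_⟩
    obtain ⟨d, hd⟩ := Nat.exists_eq_add_of_le h1
    rw [FreeGroup.norm] at hd
    rw [h2, hd, prefixList_add, List.take_append_of_le_length (by simp),
      List.take_of_length_le (by simp)]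

/-- A finite reduced word followed by an infinite one, without cancellation at the junction. -/
theorem exists_infWord (q : List (Letter α)) (hq : IsReduced q) (x : ℕ → Letter α)
    (hx : ∀ j, x (j + 1) ≠ linv (x j)) (hqx : q.getLast? ≠ some (linv (x 0))) :
    ∃ W : InfWord α, ∀ j, prefixList W (q.length + j) = q ++ (List.range j).map x := by
  refine ⟨⟨fun i => if h : i < q.length then q[i] else x (i - q.length), fun i => ?_⟩,
    fun j => ?_⟩
  · beta_reduce
    rcases lt_trichotomy (i + 1) q.length with h | h | h
    · rw [dif_pos h, dif_pos (by omega)]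
      rw [FreeGroup.IsReduced, List.isChain_iff_getElem] at hq
      have := hq i h
      rwa [reducedRel_iff] at this
    · rw [dif_neg (by omega), dif_pos (by omega)]
      intro h2
      apply hqx
      have : i = q.length - 1 := by omega
      subst this
      rw [List.getLast?_eq_getElem?, List.getElem?_eq_getElem (by omega)]
      simp only [h, Nat.sub_self] at h2
      rw [h2, linv_linv]
    · rw [dif_neg (by omega), dif_neg (by omega)]
      have : i + 1 - q.length = (i - q.length) + 1 := by omega
      rw [this]
      exact hx _
  · apply List.ext_getElem
    · simp [prefixList]
    · intro i h1 h2
      simp only [prefixList, List.getElem_map, List.getElem_range, List.getElem_append]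

/-- If `U W_i` converges to `W'`, then `W` and `W'` have the same tail, up to `U`. -/
theorem tail_of_convergesTo {W W' : InfWord α} {U : FreeGroup α}
    (h : ConvergesTo (fun i => U * wordPrefix W i) W') :
    ∃ i₀ j₀, ∀ n, U * wordPrefix W (i₀ + n) = wordPrefix W' (j₀ + n) := by
  set i₀ := U.norm + 1 with hi₀
  set T := (U * wordPrefix W i₀).toWord with hT
  have key : ∀ n, (U * wordPrefix W (i₀ + n)).toWord =
      T ++ (List.range n).map fun k => W.1 (i₀ + k) := by
    intro n
    have hred := isReduced_prefixList W (i₀ + n)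
    rw [prefixList_add] at hred
    rw [wordPrefix, prefixList_add, toWord_mul_append U _ _ hred (by simp [hi₀])]
    rfl
  refine ⟨i₀, T.length, fun n => ?_⟩
  obtain ⟨J, hJ⟩ := Filter.eventually_atTop.1 (Filter.tendsto_atTop.1 h (T.length + n))
  have h1 := ((le_wedgeF _ _ _).1 (hJ (i₀ + (n + J)) (by omega))).2
  rw [key, List.range_add, List.map_append, ← List.append_assoc,
    List.take_append_of_le_length (by simp), List.take_of_length_le (by simp), ← key] at h1
  rw [← mk_toWord (x := U * _), h1, wordPrefix]

end InfWords

/-! ### Flow rays and attracting fixed words -/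

section Rays

open FreeGroup

variable (φ : FreeGroup α →* FreeGroup α)

/-- A flow component: a class of vertices for the relation generated by `v ∼ flow v`. -/
abbrev FlowComp : Type _ := Quot fun v w : FreeGroup α => w = flow φ v

/-- The flow component of a vertex. -/
def cls (v : FreeGroup α) : FlowComp φ := Quot.mk _ v

theorem cls_flow (v : FreeGroup α) : cls φ (flow φ v) = cls φ v :=
  (Quot.sound (r := fun v w => w = flow φ v) rfl).symm

theorem cls_iterate_flow (j : ℕ) (v : FreeGroup α) : cls φ ((flow φ)^[j] v) = cls φ v := by
  induction j with
  | zero => rfl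
  | succ j ih => rw [Function.iterate_succ_apply', cls_flow, ih]

/-- A vertex whose forward flow orbit is infinite. -/
def IsRay (v : FreeGroup α) : Prop := Function.Injective fun j => (flow φ)^[j] v

variable {φ}

theorem IsRay.flow {v : FreeGroup α} (h : IsRay φ v) : IsRay φ (flow φ v) := by
  intro i j hij
  have : i + 1 = j + 1 := h (by simpa [Function.iterate_succ_apply] using hij)
  omega

theorem IsRay.ne_one {v : FreeGroup α} (h : IsRay φ v) : v ≠ 1 := by
  rintro rfl
  have : (0 : ℕ) = 1 := h (by simp [flow_one])
  omega

theorem IsRay.not_dead {v : FreeGroup α} (h : IsRay φ v) : ZZFix.flow φ (ZZFix.flow φ v) ≠ v := by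
  intro hv
  have : (2 : ℕ) = 0 := h (by simp [hv])
  omega

theorem tendsto_norm_of_injective [Finite α] {v : ℕ → FreeGroup α} (hv : Function.Injective v) :
    Tendsto (fun j => (v j).norm) atTop atTop := by
  rw [← Nat.cofinite_eq_atTop]
  have h1 : Tendsto v cofinite cofinite := hv.tendsto_cofinite
  refine Tendsto.comp (g := FreeGroup.norm) ?_ h1
  rw [Nat.cofinite_eq_atTop, Filter.tendsto_atTop]
  intro N
  rw [Filter.eventually_cofinite]
  refine Set.Finite.subset (Set.Finite.preimage (toWord_injective.injOn)
    (List.finite_length_le (α × Bool) N)) ?_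
  intro g hg
  have : ¬ N ≤ g.norm := hg
  change g.toWord.length ≤ N
  rw [FreeGroup.norm] at this
  omega

theorem exists_norm_bound [Finite α] (φ : FreeGroup α →* FreeGroup α) :
    ∃ M, ∀ x : Letter α, (φ (FreeGroup.mk [x])).norm ≤ M := by
  obtain ⟨M, hM⟩ := (Set.finite_range fun x : Letter α => (φ (FreeGroup.mk [x])).norm).bddAbove
  exact ⟨M, fun x => hM ⟨x, rfl⟩⟩

/-- In the Cayley tree of `F`, the vertex `k` lies over the vertex `v = k⁻¹ u φ(k)` of the twisted
graph; multiplying `k` on the right by the first letter of `v` lifts a step of the flow. -/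
theorem tw_mul_letter (u k : FreeGroup α) {x : Letter α} {s : List (Letter α)}
    (h : (tw φ k⁻¹ u).toWord = x :: s) :
    tw φ (k * FreeGroup.mk [x])⁻¹ u = flow φ (tw φ k⁻¹ u) := by
  rw [flow_eq_tw h, mul_inv_rev, tw_mul, mk_linv]

/-- A flow ray based at a tree vertex of minimal length traces an attracting fixed word: once the
vertices `v_j` on the ray are long, the cancellation in `v_{j+1} = x_j⁻¹ v_j φ(x_j)` stays far
from their beginnings, so `v_j` starts with a long piece of the ray it follows. -/
theorem exists_attracting [Finite α] (u k₀ : FreeGroup α) (hray : IsRay φ (tw φ k₀⁻¹ u))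
    (hmin : ∀ k, IsRay φ (tw φ k⁻¹ u) → cls φ (tw φ k⁻¹ u) = cls φ (tw φ k₀⁻¹ u) →
      k₀.norm ≤ k.norm) :
    ∃ W : InfWord α, IsAttractingFixedWord ((innerAut u).comp φ) W ∧
      ∀ᶠ i in atTop, cls φ (tw φ (wordPrefix W i)⁻¹ u) = cls φ (tw φ k₀⁻¹ u) := by
  set v : ℕ → FreeGroup α := fun j => (flow φ)^[j] (tw φ k₀⁻¹ u) with hv
  have hvs : ∀ j, v (j + 1) = flow φ (v j) := fun j => by
    simp only [hv, Function.iterate_succ_apply']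
  have hvray : ∀ j, IsRay φ (v j) := by
    intro j
    induction j with
    | zero => exact hray
    | succ j ih => rw [hvs]; exact ih.flow
  have hex : ∀ j, ∃ x s, (v j).toWord = x :: s := fun j => by
    rcases h : (v j).toWord with _ | ⟨x, s⟩
    · exact absurd (toWord_eq_nil_iff.1 h) (hvray j).ne_one
    · exact ⟨x, s, rfl⟩
  choose x s hxs using hex
  have hx : ∀ j, x (j + 1) ≠ linv (x j) := by
    intro j h
    refine (hvray j).not_dead (flow_flow_of_dead (hxs j) ?_)
    rw [← hvs, hxs, h]; rfl
  have hv0 : v 0 = tw φ k₀⁻¹ u := rfl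
  have hjunc : k₀.toWord.getLast? ≠ some (linv (x 0)) := by
    intro h
    obtain ⟨q, hq⟩ := List.getLast?_eq_some_iff.1 h
    have h1 : tw φ (k₀ * FreeGroup.mk [x 0])⁻¹ u = v 1 := by
      rw [tw_mul_letter (s := s 0) u k₀ (hxs 0), hvs, hv0]
    have h2 := hmin (k₀ * FreeGroup.mk [x 0]) (h1 ▸ hvray 1)
      (by rw [h1, hvs, cls_flow, hv0])
    have h3 : k₀ * FreeGroup.mk [x 0] = FreeGroup.mk q := by
      conv_lhs => rw [← mk_toWord (x := k₀), hq, ← mul_mk, mk_linv]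
      group
    rw [h3] at h2
    have h4 := h2.trans norm_mk_le
    rw [FreeGroup.norm, hq] at h4
    simp at h4
  obtain ⟨W, hW⟩ := exists_infWord k₀.toWord isReduced_toWord x hx hjunc
  set m := k₀.toWord.length with hm
  -- the vertex of the tree reached after `j` steps is the prefix of length `m + j`
  have hWk : ∀ j, tw φ (wordPrefix W (m + j))⁻¹ u = v j := by
    intro j
    induction j with
    | zero =>
      rw [wordPrefix, hW]
      simp [mk_toWord, hv0]
    | succ j ih =>
      have h1 : wordPrefix W (m + (j + 1)) = wordPrefix W (m + j) * FreeGroup.mk [x j] := by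
        simp only [wordPrefix, hW, List.range_succ, List.map_append, mul_mk, List.append_assoc,
          List.map_cons, List.map_nil]
      have h2 : (tw φ (wordPrefix W (m + j))⁻¹ u).toWord = x j :: s j := by rw [ih, hxs]
      rw [h1, tw_mul_letter u _ h2, ih, hvs]
  obtain ⟨M, hM⟩ := exists_norm_bound φ
  have htake : ∀ N j, (∀ i, j ≤ i → N + M ≤ (v i).norm) →
      (v j).toWord.take N = (List.range N).map fun i => x (j + i) := by
    intro N
    induction N with
    | zero => simp
    | succ N ih =>
      intro j hj
      have h1 : (FreeGroup.mk (s j)).toWord = s j :=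
        toWord_mk_of_isReduced (isReduced_of_cons (hxs j))
      have h2 : N + M ≤ (s j).length := by
        have := hj j le_rfl
        rw [FreeGroup.norm, hxs j, List.length_cons] at this
        omega
      have h3 := (take_toWord_mul (FreeGroup.mk (s j)) (φ (FreeGroup.mk [x j])) N (by
        change _ ≤ (FreeGroup.mk (s j)).toWord.length
        rw [h1]
        exact (Nat.add_le_add_left (hM _) _).trans h2)).1
      rw [← flow_eq (hxs j), ← hvs, h1, ih (j + 1) (fun i hi => by
        have := hj i (by omega); omega)] at h3
      rw [hxs j, List.take_succ_cons, ← h3, List.range_succ_eq_map]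
      simp [Function.comp_def, add_assoc, add_comm 1]
  have hψ : ∀ g, ((innerAut u).comp φ) g = g * tw φ g⁻¹ u * u⁻¹ := by
    intro g
    simp [innerAut, tw, mul_assoc]
  have hwedge : ∀ N, ∃ j₀, ∀ j, j₀ ≤ j →
      m + j + N ≤ wedgeF W (((innerAut u).comp φ) (wordPrefix W (m + j))) := by
    intro N
    obtain ⟨j₀, hj₀⟩ := Filter.eventually_atTop.1
      (Filter.tendsto_atTop.1 (tendsto_norm_of_injective (v := v) hray) (N + u.norm + M))
    refine ⟨j₀, fun j hj => ?_⟩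
    have h1 := htake (N + u.norm) j (fun i hi => hj₀ i (by omega))
    have h2 : (wordPrefix W (m + j) * v j).toWord = prefixList W (m + j) ++ (v j).toWord := by
      have h3 : IsReduced (prefixList W (m + j) ++ [x j] ++ s j) := by
        refine IsReduced.append_overlap ?_ ?_ (by simp)
        · have := isReduced_prefixList W (m + (j + 1))
          rw [hW, List.range_succ, List.map_append, ← List.append_assoc, ← hW] at this
          exact this
        · have : IsReduced (v j).toWord := isReduced_toWord
          rwa [hxs] at this
      rw [hxs, ← toWord_mk_of_isReduced (s := prefixList W (m + j) ++ x j :: s j)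
        (by simpa using h3), ← mul_mk, ← hxs, mk_toWord]
      rfl
    have h3 : (wordPrefix W (m + j) * v j).toWord.take (m + j + (N + u.norm)) =
        prefixList W (m + j + (N + u.norm)) := by
      rw [h2, List.take_append, length_prefixList, List.take_of_length_le (by simp),
        Nat.add_sub_cancel_left, h1, add_assoc, hW, hW, List.range_add (n := j), List.map_append,
        List.append_assoc]
      simp [Function.comp_def]
    have hn : m + j + (N + u.norm) ≤ (wordPrefix W (m + j) * v j).norm := by
      change _ ≤ (wordPrefix W (m + j) * v j).toWord.length
      rw [h2, List.length_append, length_prefixList]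
      have : N + u.norm + M ≤ (v j).toWord.length := hj₀ j hj
      omega
    rw [le_wedgeF, hψ, hWk]
    have h4 := take_toWord_mul (wordPrefix W (m + j) * v j) u⁻¹ (m + j + N) (by
      rw [FreeGroup.norm_inv_eq]; omega)
    refine ⟨h4.2, ?_⟩
    rw [h4.1]
    have h5 := congrArg (List.take (m + j + N)) h3
    rw [List.take_take, min_eq_left (by omega), ← add_assoc, prefixList_add,
      List.take_append_of_le_length (by simp), List.take_of_length_le (l := prefixList _ _)
      (by simp)] at h5
    exact h5
  have hwedge' : ∀ N : ℕ, ∀ᶠ i in atTop,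
      i + N ≤ wedgeF W (((innerAut u).comp φ) (wordPrefix W i)) := by
    intro N
    obtain ⟨j₀, hj₀⟩ := hwedge N
    filter_upwards [Filter.eventually_ge_atTop (m + j₀)] with i hi
    obtain ⟨d, rfl⟩ := Nat.exists_eq_add_of_le hi
    have := hj₀ (j₀ + d) (by omega)
    rwa [← add_assoc] at this
  refine ⟨W, ⟨?_, ?_⟩, ?_⟩
  · refine Filter.tendsto_atTop.2 fun N => ?_
    filter_upwards [hwedge' N] with i hi
    omega
  · refine Filter.tendsto_atTop.2 fun N => ?_
    filter_upwards [hwedge' N.toNat] with i hi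
    omega
  · filter_upwards [Filter.eventually_ge_atTop m] with i hi
    obtain ⟨j, rfl⟩ := Nat.exists_eq_add_of_le hi
    rw [hWk, cls_iterate_flow]

theorem mem_fixed_iff (u g : FreeGroup α) :
    g ∈ fixedSubgroup ((innerAut u).comp φ) ↔ tw φ g u = u := by
  change u * φ g * u⁻¹ = g ↔ g * u * (φ g)⁻¹ = u
  rw [mul_inv_eq_iff_eq_mul, mul_inv_eq_iff_eq_mul, eq_comm]

/-- Equivalent infinite words eventually run through the same flow component. -/
theorem eventually_cls_iff {u : FreeGroup α} {W W' : InfWord α}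
    (h : EquivFixedWords ((innerAut u).comp φ) W W') (r : FlowComp φ) :
    (∀ᶠ i in atTop, cls φ (tw φ (wordPrefix W i)⁻¹ u) = r) ↔
      ∀ᶠ i in atTop, cls φ (tw φ (wordPrefix W' i)⁻¹ u) = r := by
  obtain ⟨U, hU, hconv⟩ := h
  obtain ⟨i₀, j₀, hij⟩ := tail_of_convergesTo hconv
  have hU' : tw φ U⁻¹ u = u := by
    have := (fixedSubgroup _).inv_mem hU
    rwa [mem_fixed_iff] at this
  have key : ∀ n, tw φ (wordPrefix W' (n + j₀))⁻¹ u = tw φ (wordPrefix W (n + i₀))⁻¹ u := by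
    intro n
    rw [add_comm n, add_comm n, ← hij, mul_inv_rev, tw_mul, hU']
  have shift : ∀ (p : ℕ → Prop) (k : ℕ),
      (∀ᶠ i in atTop, p i) ↔ ∀ᶠ i in atTop, p (i + k) := fun p k => by
    conv_lhs => rw [← Filter.map_add_atTop_eq_nat k]
    rw [Filter.eventually_map]
  rw [shift _ i₀, shift (fun i => cls φ (tw φ (wordPrefix W' i)⁻¹ u) = r) j₀]
  simp only [key]

/-- Distinct flow components containing rays give inequivalent attracting fixed words. -/
theorem card_le_aCard [Finite α] (u : FreeGroup α) (R : Finset (FlowComp φ))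
    (hR : ∀ r ∈ R, ∃ k, IsRay φ (tw φ k⁻¹ u) ∧ cls φ (tw φ k⁻¹ u) = r) :
    (R.card : ℕ∞) ≤ aCard ((innerAut u).comp φ) := by
  have hW : ∀ r : R, ∃ W : {W : InfWord α // IsAttractingFixedWord ((innerAut u).comp φ) W},
      ∀ᶠ i in atTop, cls φ (tw φ (wordPrefix W.1 i)⁻¹ u) = r := by
    rintro ⟨r, hr⟩
    obtain ⟨k, ⟨hk1, hk2⟩, hk3⟩ := WellFounded.has_min (measure (FreeGroup.norm (α := α))).wf
      {k | IsRay φ (tw φ k⁻¹ u) ∧ cls φ (tw φ k⁻¹ u) = r} (hR r hr)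
    obtain ⟨W, hW1, hW2⟩ := exists_attracting u k hk1 (fun k' h1 h2 => by
      have := hk3 k' ⟨h1, h2.trans hk2⟩
      exact not_lt.1 this)
    exact ⟨⟨W, hW1⟩, by simpa [hk2] using hW2⟩
  choose W hW using hW
  let P : Quot (fun (W W' : {W : InfWord α // IsAttractingFixedWord ((innerAut u).comp φ) W}) =>
      EquivFixedWords ((innerAut u).comp φ) W.1 W'.1) → FlowComp φ → Prop :=
    Quot.lift (fun W r => ∀ᶠ i in atTop, cls φ (tw φ (wordPrefix W.1 i)⁻¹ u) = r)
      (fun W W' h => funext fun r => propext (eventually_cls_iff h r))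
  have hinj : Function.Injective fun r : R => (Quot.mk _ (W r) :
      Quot (fun (W W' : {W : InfWord α // IsAttractingFixedWord ((innerAut u).comp φ) W}) =>
      EquivFixedWords ((innerAut u).comp φ) W.1 W'.1)) := by
    intro r r' h
    have h1 : P (Quot.mk _ (W r)) r' := by
      have h2 : P (Quot.mk _ (W r')) r' := hW r'
      rwa [← show Quot.mk _ (W r) = Quot.mk _ (W r') from h] at h2
    have h2 : ∀ᶠ i in atTop, cls φ (tw φ (wordPrefix (W r).1 i)⁻¹ u) = r' := h1
    obtain ⟨i, hi1, hi2⟩ := ((hW r).and h2).exists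
    exact Subtype.ext (hi1.symm.trans hi2)
  have := ENat.card_le_card_of_injective hinj
  rwa [ENat.card_eq_coe_fintype_card, Fintype.card_coe] at this

end Rays

/-! ### Edges of the twisted graph and the rank inequality -/

section Graph

open FreeGroup

variable (φ : FreeGroup α →* FreeGroup α)

/-- The edge along which the flow leaves a nontrivial vertex `v`. The edge joining `w` to `tw φ i w`
is encoded as `(i, w)`. -/
def IsEdge (v : FreeGroup α) (e : α × FreeGroup α) : Prop :=
  (v.toWord.head? = some (e.1, true) ∧ e.2 = flow φ v) ∨
    (v.toWord.head? = some (e.1, false) ∧ e.2 = v)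

/-- The flow moves from `v` along an edge and immediately returns along it. -/
def Dead (v : FreeGroup α) : Prop :=
  ∃ x, v.toWord.head? = some x ∧ (flow φ v).toWord.head? = some (linv x)

/-- A vertex on a cycle of the flow which does not run back and forth along an edge. -/
def OnCycle (v : FreeGroup α) : Prop :=
  v ≠ 1 ∧ ¬ Dead φ v ∧ v ∈ Function.periodicPts (flow φ)

variable {φ}

theorem flow_of_pos {v : FreeGroup α} {i : α} (h : v.toWord.head? = some (i, true)) :
    tw φ (of i) (flow φ v) = v := by
  obtain ⟨s, hs⟩ := List.head?_eq_some_iff.1 h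
  rw [flow_eq_tw hs, mk_linv]
  exact tw_tw_inv φ (of i) v

theorem flow_of_neg {v : FreeGroup α} {i : α} (h : v.toWord.head? = some (i, false)) :
    flow φ v = tw φ (of i) v := by
  obtain ⟨s, hs⟩ := List.head?_eq_some_iff.1 h
  rw [flow_eq_tw hs]
  rfl

theorem exists_isEdge {v : FreeGroup α} (hv : v ≠ 1) : ∃ e, IsEdge φ v e := by
  rcases h : v.toWord with _ | ⟨⟨i, b⟩, s⟩
  · exact absurd (toWord_eq_nil_iff.1 h) hv
  · cases b
    · exact ⟨(i, v), Or.inr ⟨by simp [h], rfl⟩⟩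
    · exact ⟨(i, flow φ v), Or.inl ⟨by simp [h], rfl⟩⟩

/-- Distinct vertices leaving along the same edge go back and forth along it. -/
theorem IsEdge.eq_or_dead {v v' : FreeGroup α} {e : α × FreeGroup α} (h : IsEdge φ v e)
    (h' : IsEdge φ v' e) : v = v' ∨ (Dead φ v ∧ Dead φ v') := by
  have key : ∀ {v v' : FreeGroup α}, v.toWord.head? = some (e.1, true) → e.2 = flow φ v →
      v'.toWord.head? = some (e.1, false) → e.2 = v' → Dead φ v ∧ Dead φ v' := by
    intro v v' h1 h2 h3 h4
    have h5 : flow φ v' = v := by rw [flow_of_neg h3, ← h4, h2, flow_of_pos h1]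
    exact ⟨⟨_, h1, by rw [← h2, h4, h3]; rfl⟩, ⟨_, h3, by rw [h5, h1]; rfl⟩⟩
  rcases h with ⟨h1, h2⟩ | ⟨h1, h2⟩ <;> rcases h' with ⟨h3, h4⟩ | ⟨h3, h4⟩
  · left
    rw [← flow_of_pos (φ := φ) h1, ← flow_of_pos (φ := φ) h3, ← h2, ← h4]
  · exact Or.inr (key h1 h2 h3 h4)
  · exact Or.inr (key h3 h4 h1 h2).symm
  · exact Or.inl (h2.symm.trans h4)

theorem IsEdge.not_suffix {v : FreeGroup α} {e : α × FreeGroup α} (h : IsEdge φ v e) :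
    ¬ (e.1, true) :: e.2.toWord <:+ (φ (of e.1)).toWord := by
  intro hs
  obtain ⟨h1, h2⟩ := unflowed_of_suffix hs
  rcases h with ⟨h3, h4⟩ | ⟨h3, h4⟩
  · rw [h4, flow_of_pos h3] at h2
    exact h2 h3
  · rw [h4] at h1
    exact h1 h3

/-- The endpoints of an edge used by the flow lie in the same flow component. -/
theorem cls_eq_of_not_suffix {i : α} {w : FreeGroup α}
    (h : ¬ (i, true) :: w.toWord <:+ (φ (of i)).toWord) :
    cls φ (tw φ (of i) w) = cls φ w := by
  by_cases h1 : w.toWord.head? = some (i, false)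
  · rw [← flow_of_neg h1, cls_flow]
  · by_cases h2 : (tw φ (of i) w).toWord.head? = some (i, true)
    · rw [← cls_flow]
      congr 1
      have := congrArg (tw φ (of i)⁻¹) (flow_of_pos (φ := φ) h2)
      rwa [tw_inv_tw, tw_inv_tw] at this
    · exact absurd (suffix_of_unflowed h1 h2) h

/-- Flow components containing a vertex `y` that goes back and forth come from occurrences of an
inverse letter `i⁻¹` in `φ(i)`. -/
theorem Dead.exists_edge {y : FreeGroup α} (h : Dead φ y) : ∃ i w, cls φ w = cls φ y ∧
    w.toWord.head? = some (i, false) ∧ w.toWord <:+ (φ (of i)).toWord := by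
  obtain ⟨⟨i, b⟩, h1, h2⟩ := h
  cases b
  · refine ⟨i, y, rfl, h1, suffix_of_dead h1 ?_⟩
    rw [← flow_of_neg h1, h2]
    rfl
  · have h2' : (flow φ y).toWord.head? = some (i, false) := h2
    refine ⟨i, flow φ y, cls_flow φ y, h2', suffix_of_dead h2' ?_⟩
    rw [flow_of_pos h1, h1]

/-- Every flow component contains an injective ray, the vertex `1`, a vertex at which the flow
goes back and forth, or a cycle. -/
theorem ray_or_periodic (v : FreeGroup α) : IsRay φ v ∨ cls φ v = cls φ 1 ∨
    ∃ j, Dead φ ((flow φ)^[j] v) ∨ OnCycle φ ((flow φ)^[j] v) := by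
  by_cases hr : IsRay φ v
  · exact Or.inl hr
  right
  obtain ⟨i, j, hij, hlt⟩ : ∃ i j, (flow φ)^[i] v = (flow φ)^[j] v ∧ i < j := by
    simp only [IsRay, Function.Injective, not_forall] at hr
    obtain ⟨a, b, hab, hne⟩ := hr
    rcases lt_or_gt_of_ne hne with h | h
    · exact ⟨a, b, hab, h⟩
    · exact ⟨b, a, hab.symm, h⟩
  by_cases h1 : (flow φ)^[i] v = 1
  · left
    rw [← h1, cls_iterate_flow]
  · refine Or.inr ⟨i, ?_⟩
    by_cases h2 : Dead φ ((flow φ)^[i] v)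
    · exact Or.inl h2
    · refine Or.inr ⟨h1, h2, Function.mk_mem_periodicPts (n := j - i) (by omega) ?_⟩
      rw [Function.IsPeriodicPt, Function.IsFixedPt, ← Function.iterate_add_apply,
        Nat.sub_add_cancel hlt.le, ← hij]

/-- The universal one-cocycle of the twisted action: `κ g u` evaluates a cochain on edges along the
path from `u` to `g · u` spelled by `g`. -/
theorem exists_cocycle (φ : FreeGroup α →* FreeGroup α) :
    ∃ κ : FreeGroup α → FreeGroup α → ((α × FreeGroup α → ℚ) →ₗ[ℚ] ℚ),
      (∀ g h u, κ (g * h) u = κ g (tw φ h u) + κ h u) ∧ ∀ i u c, κ (of i) u c = c (i, u) := by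
  let M := (α × FreeGroup α → ℚ) →ₗ[ℚ] ℚ
  -- the group acts on pairs (endpoint of a path, functional accumulated along it)
  let σ : α → Equiv.Perm (FreeGroup α × M) := fun i =>
    { toFun := fun p => (tw φ (of i) p.1, p.2 + LinearMap.proj (i, p.1))
      invFun := fun p => (tw φ (of i)⁻¹ p.1, p.2 - LinearMap.proj (i, tw φ (of i)⁻¹ p.1))
      left_inv := fun p => by simp [tw_inv_tw]
      right_inv := fun p => by simp [tw_tw_inv] }
  let ρ : FreeGroup α →* Equiv.Perm (FreeGroup α × M) := FreeGroup.lift σ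
  have hρ : ∀ g u m, ρ g (u, m) = (tw φ g u, m + (ρ g (u, 0)).2) := by
    intro g
    induction g using FreeGroup.induction_on with
    | C1 => simp
    | of i => intro u m; simp [ρ, σ]
    | inv_of i _ =>
      intro u m
      rw [_root_.map_inv]
      simp only [ρ, FreeGroup.lift_apply_of]
      change (_, _) = (_, m + (0 - _))
      simp [sub_eq_add_neg]
    | mul g h hg hh =>
      intro u m
      rw [_root_.map_mul, Equiv.Perm.mul_apply, Equiv.Perm.mul_apply, hh u m, hh u 0,
        hg _ (m + _), hg _ (0 + _), tw_mul, zero_add, add_assoc]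
  refine ⟨fun g u => (ρ g (u, 0)).2, fun g h u => ?_, fun i u c => ?_⟩
  · have h0 : ρ h (u, 0) = (tw φ h u, (ρ h (u, 0)).2) := Prod.ext (by rw [hρ]) rfl
    calc (ρ (g * h) (u, 0)).2 = (ρ g (ρ h (u, 0))).2 := by
          rw [_root_.map_mul, Equiv.Perm.mul_apply]
      _ = (ρ g (tw φ h u, (ρ h (u, 0)).2)).2 := by rw [← h0]
      _ = _ := by rw [hρ g _ (ρ h (u, 0)).2, add_comm]
  · simp [ρ, σ]

/-- The rank inequality for the graph of a twisted orbit. A cochain `c` supported on the finite set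
`E` of edges whose potentials are constant along the flow is determined by its values on generators
of the stabilizer and on paths from `u` to the other flow components. -/
theorem card_edges_le (φ : FreeGroup α →* FreeGroup α) (u : FreeGroup α)
    (S : Finset (FreeGroup α))
    (hS : Subgroup.closure (S : Set (FreeGroup α)) = fixedSubgroup ((innerAut u).comp φ))
    (E : Finset (α × FreeGroup α)) (hE : ∀ e ∈ E, ∃ g, e.2 = tw φ g u)
    (V : Finset (FlowComp φ)) (hV : ∀ p, p ∈ V ↔ ∃ g, cls φ (tw φ g u) = p)
    (hflow : ∀ (c : α × FreeGroup α → ℚ) (h : FreeGroup α → ℚ), (∀ e ∉ E, c e = 0) →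
      (∀ i g, h (tw φ (of i) (tw φ g u)) = h (tw φ g u) + c (i, tw φ g u)) →
      ∀ g, h (flow φ (tw φ g u)) = h (tw φ g u)) :
    E.card + 1 ≤ S.card + V.card := by
  classical
  obtain ⟨κ, hmul, hof⟩ := exists_cocycle φ
  have hone : ∀ v, κ 1 v = 0 := fun v => by
    have := hmul 1 1 v
    rw [mul_one, tw_one] at this
    simpa using this
  have hrep : ∀ p : V, ∃ g, cls φ (tw φ g u) = p := fun p => (hV p).1 p.2
  choose r hr using hrep
  let ext : (E → ℚ) →ₗ[ℚ] (α × FreeGroup α → ℚ) :=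
    { toFun := fun c e => if h : e ∈ E then c ⟨e, h⟩ else 0
      map_add' := fun c d => by ext e; by_cases h : e ∈ E <;> simp [h]
      map_smul' := fun a c => by ext e; by_cases h : e ∈ E <;> simp [h] }
  let V' := {p : V // (p : FlowComp φ) ≠ cls φ u}
  let Φ : (E → ℚ) →ₗ[ℚ] (S ⊕ V' → ℚ) := LinearMap.pi fun k =>
    (Sum.elim (fun s : S => κ s u) (fun p : V' => κ (r p.1) u) k).comp ext
  have hΦ : Function.Injective Φ := by
    rw [injective_iff_map_eq_zero]
    intro c hc
    set c' := ext c with hc'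
    have hT : ∀ s ∈ S, κ s u c' = 0 := fun s hs => congrFun hc (Sum.inl ⟨s, hs⟩)
    have hH : ∀ p : V, (p : FlowComp φ) ≠ cls φ u → κ (r p) u c' = 0 := fun p hp =>
      congrFun hc (Sum.inr ⟨p, hp⟩)
    have hfix : ∀ g, tw φ g u = u → κ g u c' = 0 := by
      intro g hg
      have hg' : g ∈ Subgroup.closure (S : Set (FreeGroup α)) := by
        rw [hS, mem_fixed_iff]; exact hg
      have hfx : ∀ g ∈ Subgroup.closure (S : Set (FreeGroup α)), tw φ g u = u := fun g hg => by
        rwa [hS, mem_fixed_iff] at hg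
      clear hg
      induction hg' using Subgroup.closure_induction with
      | mem x hx => exact hT x hx
      | one => simp [hone]
      | mul x y hx hy h1 h2 => rw [hmul, hfx y hy, LinearMap.add_apply, h1, h2, add_zero]
      | inv x hx h1 =>
        have := congrArg (fun m => m c') (hmul x⁻¹ x u)
        simp only [inv_mul_cancel, hone, hfx x hx, LinearMap.add_apply, h1,
          LinearMap.zero_apply, add_zero] at this
        exact this.symm
    have hwell : ∀ g g', tw φ g u = tw φ g' u → κ g u c' = κ g' u c' := by
      intro g g' hgg
      have h1 : tw φ (g⁻¹ * g') u = u := by rw [tw_mul, ← hgg, tw_inv_tw]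
      have h2 := hmul g (g⁻¹ * g') u
      rw [mul_inv_cancel_left, h1] at h2
      rw [h2, LinearMap.add_apply, hfix _ h1, add_zero]
    -- the potential of `c'` on the orbit of `u`, extended by zero
    let h : FreeGroup α → ℚ := fun v =>
      if hv : ∃ g, tw φ g u = v then κ hv.choose u c' else 0
    have hh : ∀ g, h (tw φ g u) = κ g u c' := by
      intro g
      have hv : ∃ g', tw φ g' u = tw φ g u := ⟨g, rfl⟩
      simp only [h, dif_pos hv]
      exact hwell _ _ hv.choose_spec
    have hstep : ∀ i g, h (tw φ (of i) (tw φ g u)) = h (tw φ g u) + c' (i, tw φ g u) := by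
      intro i g
      rw [← tw_mul, hh, hh, hmul, LinearMap.add_apply, hof, add_comm]
    have hfl := hflow c' h (fun e he => by simp [hc', ext, he]) hstep
    have hfl' : ∀ v, h (flow φ v) = h v := by
      intro v
      by_cases hv : ∃ g, tw φ g u = v
      · obtain ⟨g, rfl⟩ := hv
        exact hfl g
      · have hv' : ¬ ∃ g, tw φ g u = flow φ v := by
          rintro ⟨g, hg⟩
          apply hv
          rcases hw : v.toWord with _ | ⟨x, s⟩
          · refine ⟨g, ?_⟩
            rw [hg, toWord_eq_nil_iff.1 hw, flow_one]
          · refine ⟨(FreeGroup.mk [linv x])⁻¹ * g, ?_⟩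
            rw [tw_mul, hg, flow_eq_tw hw, tw_inv_tw]
        simp only [h, dif_neg hv, dif_neg hv']
    let hq : FlowComp φ → ℚ := Quot.lift h fun v w hvw => by rw [hvw, hfl']
    have hzero : ∀ g, h (tw φ g u) = 0 := by
      intro g
      have hu : h u = 0 := by
        have := hh 1
        rwa [tw_one, hone] at this
      have hcls : ∀ v w, cls φ v = cls φ w → h v = h w := fun v w hvw => congrArg hq hvw
      by_cases hp : cls φ (tw φ g u) = cls φ u
      · rw [hcls _ _ hp, hu]
      · have h1 := hr ⟨cls φ (tw φ g u), (hV _).2 ⟨g, rfl⟩⟩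
        rw [← hcls _ _ h1, hh]
        exact hH ⟨cls φ (tw φ g u), (hV _).2 ⟨g, rfl⟩⟩ hp
    ext ⟨⟨i, w⟩, he⟩
    obtain ⟨g, rfl⟩ := hE _ he
    have h1 := hstep i g
    rw [hzero, ← tw_mul, hzero, zero_add] at h1
    simpa [hc', ext, he] using h1.symm
  have hle := LinearMap.finrank_le_finrank_of_injective hΦ
  rw [Module.finrank_fintype_fun_eq_card, Module.finrank_fintype_fun_eq_card, Fintype.card_sum,
    Fintype.card_coe, Fintype.card_coe] at hle
  have hlt : Fintype.card V' < V.card := by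
    rw [← Fintype.card_coe V]
    exact Fintype.card_subtype_lt (x := ⟨cls φ u, (hV _).2 ⟨1, by rw [tw_one]⟩⟩) (by simp)
  omega

end Graph

/-! ### The index count on one twisted orbit -/

section Index

open FreeGroup

variable {φ : FreeGroup α →* FreeGroup α}

/-- The orbit of a vertex under the twisted action. -/
def orb (φ : FreeGroup α →* FreeGroup α) (v : FreeGroup α) : Set (FreeGroup α) :=
  Set.range fun g => tw φ g v

theorem mem_orb_self (v : FreeGroup α) : v ∈ orb φ v := ⟨1, tw_one φ v⟩

theorem orb_tw (g v : FreeGroup α) : orb φ (tw φ g v) = orb φ v := by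
  ext w
  constructor
  · rintro ⟨k, rfl⟩
    exact ⟨k * g, tw_mul φ k g v⟩
  · rintro ⟨k, rfl⟩
    exact ⟨k * g⁻¹, by beta_reduce; rw [tw_mul, tw_inv_tw]⟩

theorem orb_eq_iff {v w : FreeGroup α} : orb φ w = orb φ v ↔ ∃ g, w = tw φ g v := by
  constructor
  · intro h
    obtain ⟨g, hg⟩ : w ∈ orb φ v := h ▸ mem_orb_self w
    exact ⟨g, hg.symm⟩
  · rintro ⟨g, rfl⟩
    exact orb_tw g v

theorem orb_flow (v : FreeGroup α) : orb φ (flow φ v) = orb φ v := by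
  rcases h : v.toWord with _ | ⟨x, s⟩
  · rw [toWord_eq_nil_iff.1 h, flow_one]
  · rw [flow_eq_tw h, orb_tw]

/-- The twisted orbit containing a flow component. -/
def orbC (φ : FreeGroup α →* FreeGroup α) : FlowComp φ → Set (FreeGroup α) :=
  Quot.lift (orb φ) fun v w h => by rw [h, orb_flow]

theorem orbC_cls (v : FreeGroup α) : orbC φ (cls φ v) = orb φ v := rfl

/-- Potentials of a cochain are constant along the flow when the cochain is supported on edges not
used by the flow and on at most one edge of each cycle of the flow. -/
theorem potential_flow {u : FreeGroup α} {c : α × FreeGroup α → ℚ} {h : FreeGroup α → ℚ}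
    (T : Finset (FreeGroup α)) (hT : ∀ t ∈ T, OnCycle φ t)
    (hTinj : ∀ t ∈ T, ∀ t' ∈ T, cls φ t = cls φ t' → t = t')
    (hc : ∀ e, (e.1, true) :: e.2.toWord <:+ (φ (of e.1)).toWord ∨ (∃ t ∈ T, IsEdge φ t e) ∨
      c e = 0)
    (hh : ∀ i g, h (tw φ (of i) (tw φ g u)) = h (tw φ g u) + c (i, tw φ g u))
    (g : FreeGroup α) : h (flow φ (tw φ g u)) = h (tw φ g u) := by
  have hstep : ∀ v, orb φ v = orb φ u → v ∉ T → h (flow φ v) = h v := by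
    intro v hv hvT
    by_cases hv1 : v = 1
    · rw [hv1, flow_one]
    obtain ⟨e, he⟩ := exists_isEdge (φ := φ) hv1
    have hce : c e = 0 := by
      rcases hc e with h1 | ⟨t, ht, hte⟩ | h1
      · exact absurd h1 he.not_suffix
      · rcases he.eq_or_dead hte with rfl | ⟨-, h2⟩
        · exact absurd ht hvT
        · exact absurd h2 (hT t ht).2.1
      · exact h1
    rcases he with ⟨h1, h2⟩ | ⟨h1, h2⟩
    · obtain ⟨k, hk⟩ := orb_eq_iff.1 ((orb_flow v).trans hv)
      have := hh e.1 k
      rw [← hk, flow_of_pos h1, ← h2, Prod.mk.eta, hce, add_zero] at this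
      rw [this, h2]
    · obtain ⟨k, hk⟩ := orb_eq_iff.1 hv
      have := hh e.1 k
      rw [← hk, ← flow_of_neg h1, ← h2, Prod.mk.eta, hce, add_zero] at this
      rw [← h2, this]
  by_cases ht : tw φ g u ∈ T
  · set t := tw φ g u with htdef
    have hto : ∀ j, orb φ ((flow φ)^[j] t) = orb φ u := by
      intro j
      induction j with
      | zero => exact orb_tw g u
      | succ j ih => rw [Function.iterate_succ_apply', orb_flow, ih]
    have hp : 0 < Function.minimalPeriod (flow φ) t :=
      Function.minimalPeriod_pos_of_mem_periodicPts (hT t ht).2.2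
    have hcyc : ∀ j, j < Function.minimalPeriod (flow φ) t →
        h ((flow φ)^[j + 1] t) = h (flow φ t) := by
      intro j
      induction j with
      | zero => intro _; rfl
      | succ j ih =>
        intro hj
        rw [Function.iterate_succ_apply', hstep _ (hto _), ih (by omega)]
        intro hmem
        have := hTinj _ hmem t ht (cls_iterate_flow φ _ _)
        exact Function.not_isPeriodicPt_of_pos_of_lt_minimalPeriod (by omega) hj this
    have := hcyc (Function.minimalPeriod (flow φ) t - 1) (by omega)
    rw [Nat.sub_add_cancel hp, Function.iterate_minimalPeriod] at this
    exact this.symm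
  · exact hstep _ (orb_tw g u) ht

/-- The index inequality on the twisted orbit of `u`: here `P` are the edges of the orbit not used
by the flow, and `D` contains the flow components of `1` and of the vertices at which the flow goes
back and forth. -/
theorem exists_rays (u : FreeGroup α) (S : Finset (FreeGroup α))
    (hS : Subgroup.closure (S : Set (FreeGroup α)) = fixedSubgroup ((innerAut u).comp φ))
    (P : Finset (α × FreeGroup α))
    (hP : ∀ i w, (i, w) ∈ P ↔
      (i, true) :: w.toWord <:+ (φ (of i)).toWord ∧ orb φ w = orb φ u)
    (D : Finset (FlowComp φ))
    (hD1 : orb φ 1 = orb φ u → cls φ 1 ∈ D)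
    (hD : ∀ i w, w.toWord.head? = some (i, false) → w.toWord <:+ (φ (of i)).toWord →
      orb φ w = orb φ u → cls φ w ∈ D) :
    ∃ R : Finset (FlowComp φ), (∀ r ∈ R, ∃ k, IsRay φ (tw φ k⁻¹ u) ∧ cls φ (tw φ k⁻¹ u) = r) ∧
      P.card + 1 ≤ S.card + D.card + R.card := by
  classical
  -- a finite set containing all flow components of the orbit
  let Q : Finset (FlowComp φ) := insert (cls φ u)
    (P.image (fun e => cls φ e.2) ∪ P.image (fun e => cls φ (tw φ (of e.1) e.2)))
  have hQstep : ∀ i w, orb φ w = orb φ u → (cls φ (tw φ (of i) w) ∈ Q ↔ cls φ w ∈ Q) := by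
    intro i w hw
    by_cases h : (i, true) :: w.toWord <:+ (φ (of i)).toWord
    · have hmem := (hP i w).2 ⟨h, hw⟩
      refine iff_of_true ?_ ?_
      · exact Finset.mem_insert_of_mem (Finset.mem_union_right _
          (Finset.mem_image.2 ⟨(i, w), hmem, rfl⟩))
      · exact Finset.mem_insert_of_mem (Finset.mem_union_left _
          (Finset.mem_image.2 ⟨(i, w), hmem, rfl⟩))
    · rw [cls_eq_of_not_suffix h]
  have hQ : ∀ g v, orb φ v = orb φ u → (cls φ (tw φ g v) ∈ Q ↔ cls φ v ∈ Q) := by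
    intro g
    induction g using FreeGroup.induction_on with
    | C1 => simp
    | of i => exact hQstep i
    | inv_of i _ =>
      intro v hv
      rw [← hQstep i _ ((orb_tw _ v).trans hv), tw_tw_inv]
    | mul g h hg hh =>
      intro v hv
      rw [tw_mul, hg _ ((orb_tw h v).trans hv), hh v hv]
  let V : Finset (FlowComp φ) := Q.filter fun p => ∃ g, cls φ (tw φ g u) = p
  have hV : ∀ p, p ∈ V ↔ ∃ g, cls φ (tw φ g u) = p := by
    intro p
    rw [Finset.mem_filter, and_iff_right_iff_imp]
    rintro ⟨g, rfl⟩
    exact (hQ g u rfl).2 (Finset.mem_insert_self _ _)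
  let R : Finset (FlowComp φ) :=
    V.filter fun p => ∃ g, IsRay φ (tw φ g u) ∧ cls φ (tw φ g u) = p
  let L : Finset (FlowComp φ) :=
    V.filter fun p => ∃ t, OnCycle φ t ∧ orb φ t = orb φ u ∧ cls φ t = p
  have hcover : V ⊆ D ∪ L ∪ R := by
    intro p hp
    obtain ⟨g, rfl⟩ := (hV p).1 hp
    have ho : ∀ j, orb φ ((flow φ)^[j] (tw φ g u)) = orb φ u := by
      intro j
      rw [← orbC_cls, cls_iterate_flow, orbC_cls, orb_tw]
    rcases ray_or_periodic (φ := φ) (tw φ g u) with h | h | ⟨j, h | h⟩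
    · exact Finset.mem_union_right _ (Finset.mem_filter.2 ⟨hp, g, h, rfl⟩)
    · refine Finset.mem_union_left _ (Finset.mem_union_left _ ?_)
      rw [h]
      refine hD1 ?_
      rw [← orbC_cls, ← h, orbC_cls, orb_tw]
    · refine Finset.mem_union_left _ (Finset.mem_union_left _ ?_)
      obtain ⟨i, w, h1, h2, h3⟩ := h.exists_edge
      rw [cls_iterate_flow] at h1
      rw [← h1]
      refine hD i w h2 h3 ?_
      rw [← orbC_cls, h1, orbC_cls, orb_tw]
    · exact Finset.mem_union_left _ (Finset.mem_union_right _
        (Finset.mem_filter.2 ⟨hp, _, h, ho j, cls_iterate_flow φ _ _⟩))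
  have hL : ∀ l : L, ∃ t, OnCycle φ t ∧ orb φ t = orb φ u ∧ cls φ t = l := fun l =>
    (Finset.mem_filter.1 l.2).2
  choose t ht hto htl using hL
  choose ed hed using fun l : L => exists_isEdge (φ := φ) (ht l).1
  let T : Finset (FreeGroup α) := Finset.univ.image t
  have hedinj : Function.Injective ed := by
    intro l l' h
    rcases (hed l).eq_or_dead (h ▸ hed l') with h1 | ⟨h1, -⟩
    · exact Subtype.ext (by rw [← htl, ← htl, h1])
    · exact absurd h1 (ht l).2.1
  let E : Finset (α × FreeGroup α) := P ∪ Finset.univ.image ed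
  have hEcard : E.card = P.card + L.card := by
    rw [Finset.card_union_of_disjoint, Finset.card_image_of_injective _ hedinj, Finset.card_univ,
      Fintype.card_coe]
    rw [Finset.disjoint_left]
    intro e he he'
    obtain ⟨l, -, rfl⟩ := Finset.mem_image.1 he'
    exact (hed l).not_suffix ((hP _ _).1 he).1
  have hEorb : ∀ e ∈ E, ∃ g, e.2 = tw φ g u := by
    intro e he
    rw [← orb_eq_iff]
    rcases Finset.mem_union.1 he with h | h
    · exact ((hP e.1 e.2).1 h).2
    · obtain ⟨l, -, rfl⟩ := Finset.mem_image.1 h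
      rcases hed l with ⟨-, h1⟩ | ⟨-, h1⟩
      · rw [h1, orb_flow, hto]
      · rw [h1, hto]
  have hmain := card_edges_le φ u S hS E hEorb V hV (by
    intro c h hc hh
    -- edges outside the orbit are irrelevant, so `c` may be replaced by zero there
    refine potential_flow (c := fun e => if orb φ e.2 = orb φ u then c e else 0) T ?_ ?_ ?_ ?_
    · intro x hx
      obtain ⟨l, -, rfl⟩ := Finset.mem_image.1 hx
      exact ht l
    · intro x hx y hy hxy
      obtain ⟨l, -, rfl⟩ := Finset.mem_image.1 hx
      obtain ⟨l', -, rfl⟩ := Finset.mem_image.1 hy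
      rw [htl, htl] at hxy
      rw [Subtype.ext hxy]
    · intro e
      by_cases he : e ∈ E
      · rcases Finset.mem_union.1 he with h1 | h1
        · exact Or.inl ((hP e.1 e.2).1 h1).1
        · obtain ⟨l, -, rfl⟩ := Finset.mem_image.1 h1
          exact Or.inr (Or.inl ⟨t l, Finset.mem_image_of_mem _ (Finset.mem_univ _), hed l⟩)
      · refine Or.inr (Or.inr ?_)
        simp [hc e he]
    · intro i g
      rw [hh, if_pos (orb_tw g u)])
  have h1 := (Finset.card_le_card hcover).trans (Finset.card_union_le _ _)
  have h2 := Finset.card_union_le D L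
  refine ⟨R, fun r hr => ?_, by omega⟩
  obtain ⟨g, hg⟩ := (Finset.mem_filter.1 hr).2
  exact ⟨g⁻¹, by rwa [inv_inv]⟩

/-- If the positive occurrences of generators `i` in their images `φ(i)` exceed the negative ones by
at least two, some twisted orbit has more unused edges than exceptional flow components. -/
theorem exists_orbit [Fintype α] (φ : FreeGroup α →* FreeGroup α)
    (h : ∑ i, (φ (of i)).toWord.count (i, false) + 2 ≤ ∑ i, (φ (of i)).toWord.count (i, true)) :
    ∃ (u : FreeGroup α) (P : Finset (α × FreeGroup α)) (D : Finset (FlowComp φ)),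
      (∀ i w, (i, w) ∈ P ↔ (i, true) :: w.toWord <:+ (φ (of i)).toWord ∧ orb φ w = orb φ u) ∧
      (orb φ 1 = orb φ u → cls φ 1 ∈ D) ∧
      (∀ i w, w.toWord.head? = some (i, false) → w.toWord <:+ (φ (of i)).toWord →
        orb φ w = orb φ u → cls φ w ∈ D) ∧ D.card < P.card := by
  classical
  obtain ⟨P, hP, hPc⟩ := exists_posOcc φ
  obtain ⟨N, hN, hNc⟩ := exists_negOcc φ
  let D : Finset (FlowComp φ) := insert (cls φ 1) (N.image fun e => cls φ e.2)
  have hDc : D.card < P.card := by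
    have h1 : D.card ≤ (N.image fun e => cls φ e.2).card + 1 := Finset.card_insert_le _ _
    have h2 : (N.image fun e => cls φ e.2).card ≤ N.card := Finset.card_image_le
    omega
  obtain ⟨u, hu⟩ : ∃ u, (D.filter fun p => orbC φ p = orb φ u).card <
      (P.filter fun e => orb φ e.2 = orb φ u).card := by
    by_contra! hcon
    refine absurd hDc (not_lt.2 ?_)
    rw [Finset.card_eq_sum_card_image (fun e => orb φ e.2) P]
    calc _ ≤ ∑ X ∈ P.image (fun e => orb φ e.2), (D.filter fun p => orbC φ p = X).card := by
          refine Finset.sum_le_sum fun X hX => ?_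
          obtain ⟨e, -, rfl⟩ := Finset.mem_image.1 hX
          exact hcon e.2
      _ = (D.filter fun p => orbC φ p ∈ P.image (fun e => orb φ e.2)).card :=
          Finset.sum_card_fiberwise_eq_card_filter _ _ _
      _ ≤ D.card := Finset.card_filter_le _ _
  refine ⟨u, _, _, fun i w => ?_, fun h1 => ?_, fun i w h1 h2 h3 => ?_, hu⟩
  · rw [Finset.mem_filter, hP]
  · exact Finset.mem_filter.2 ⟨Finset.mem_insert_self _ _, h1⟩
  · exact Finset.mem_filter.2 ⟨Finset.mem_insert_of_mem
      (Finset.mem_image.2 ⟨(i, w), hN i w h1 h2, rfl⟩), h3⟩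

theorem abTrace_eq {n : ℕ} (φ : FreeGroup (Fin n) →* FreeGroup (Fin n)) :
    abTrace φ = ∑ i, ((φ (of i)).toWord.count (i, true) : ℤ) -
      ∑ i, ((φ (of i)).toWord.count (i, false) : ℤ) := by
  rw [abTrace, ← Finset.sum_sub_distrib]
  refine Finset.sum_congr rfl fun i _ => ?_
  rw [← lift_eq_count, mk_toWord]

end Index

/-! ### The theorem -/

/-- if `n ≤ 2` and `tr(φ^ab) > 1` then some `i_c ∘ φ` has
`rk(fix) + a > 1`. -/
theorem stmt3 {n : ℕ} (hn : n ≤ 2) (φ : FreeGroup (Fin n) →* FreeGroup (Fin n))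
    (hφ : Function.Injective φ) (htr : 1 < abTrace φ) :
    ∃ c : FreeGroup (Fin n),
      1 < grpRank (fixedSubgroup ((innerAut c).comp φ)) + aCard ((innerAut c).comp φ) := by
  rw [abTrace_eq, ← Nat.cast_sum, ← Nat.cast_sum] at htr
  obtain ⟨u, P, D, hP, hD1, hD, hcard⟩ := exists_orbit φ (by omega)
  refine ⟨u, ?_⟩
  by_cases htop : grpRank (fixedSubgroup ((innerAut u).comp φ)) = ⊤
  · rw [htop, top_add]
    exact ENat.one_lt_top
  · have hne : {k : ℕ∞ | ∃ S : Finset (FreeGroup (Fin n)), Subgroup.closure (S : Set _) =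
        fixedSubgroup ((innerAut u).comp φ) ∧ (S.card : ℕ∞) = k}.Nonempty := by
      by_contra hemp
      rw [Set.not_nonempty_iff_eq_empty] at hemp
      exact htop (by rw [grpRank, hemp, sInf_empty])
    obtain ⟨S, hS, hSc⟩ := csInf_mem hne
    obtain ⟨R, hR, hle⟩ := exists_rays u S hS P hP D hD1 hD
    rw [grpRank, ← hSc]
    refine lt_of_lt_of_le ?_ (add_le_add le_rfl (card_le_aCard u R hR))
    exact_mod_cast (by omega : 1 < S.card + R.card)

end ZZFix
end

section
/- Let W be an attracting fixed word of an injective endomorphism φ of the free group F_n. Then W is not a limit of elements of the fixed subgroup fix(φ): there is a uniform bound on |W ∧ u| over all u ∈ fix(φ). -/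
/-! The argument is a coarse separation argument in the Cayley tree of the free group.

Let `L` bound the word length of the images of the letters, so that `φ` is `L`-Lipschitz
(`norm_map_le`), and let `M` bound the word length of the elements that `φ` maps into the ball of
radius `2L`. Such an `M` exists because the ball is finite and `φ` is injective
(`exists_preimage_bound`).

Let `u` be a fixed element, `i = |W ∧ u|`, and suppose that `|W ∧ φ(W_i)| > i`. Write `u_j` for the
length-`j` prefix of `u`, so `u_i = W_i`, and let `q = W_{i+1}`. The path
`φ(u_0) = 1, φ(u_1), …, φ(u_{|u|}) = u` starts outside the cone of words with prefix `q`, is inside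
it at time `i`, and ends outside it. Entering or leaving the cone with steps of length at most `L`
forces the path to come within `L` of `q` (`norm_le_of_crossing`), so there are `k ≤ i ≤ j` with
`φ(u_k)` and `φ(u_j)` both within `L` of `q`. Then `φ(u_k⁻¹ u_j)` has length at most `2L`, hence
`j - k ≤ M`, and so `φ(W_i)` is within `L + LM` of `q`. Consequently
`|W ∧ φ(W_i)| ≤ |φ(W_i)| ≤ i + 1 + L + LM`, which for an attracting `W` bounds `i`. -/

open Filter

namespace ZZFix

variable {α : Type*} [DecidableEq α]

/-! ### Common prefixes -/

theorem le_commonPrefixLength_iff {β : Type*} [DecidableEq β] (k : ℕ) (a b : List β) :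
    k ≤ commonPrefixLength a b ↔ k ≤ a.length ∧ a.take k <+: b := by
  induction k generalizing a b with
  | zero => simp
  | succ k ih =>
    cases a with
    | nil => simp [commonPrefixLength]
    | cons x a =>
      cases b with
      | nil => simp [commonPrefixLength]
      | cons y b =>
        by_cases h : x = y
        · simp [commonPrefixLength, h, ih, List.cons_prefix_cons]
        · simp [commonPrefixLength, h, List.cons_prefix_cons]

theorem prefixList_length {β : Type*} (W : InfWord β) (k : ℕ) : (prefixList W k).length = k := by
  simp [prefixList]

theorem le_wedgeF_iff (W : InfWord α) (g : FreeGroup α) (k : ℕ) :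
    k ≤ wedgeF W g ↔ prefixList W k <+: g.toWord := by
  have take_eq : ∀ m, k ≤ m → (prefixList W m).take k = prefixList W k := by
    intro m hm
    simp [prefixList, ← List.map_take, List.take_range, hm]
  rw [wedgeF, le_commonPrefixLength_iff, prefixList_length]
  constructor
  · rintro ⟨h1, h2⟩
    rwa [take_eq _ h1] at h2
  · intro h
    have h1 := h.length_le
    rw [prefixList_length] at h1
    exact ⟨h1, by rwa [take_eq _ h1]⟩

/-! ### Cones in the Cayley tree -/

/-- Left multiplication by a word of length `m` destroys at most `m` letters of a reduced word, so
a sufficiently short suffix survives. -/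
theorem suffix_mk_mul (s : List (α × Bool)) (x : List (α × Bool)) (g : FreeGroup α)
    (hs : s <:+ g.toWord) (hl : x.length + s.length ≤ g.toWord.length) :
    s <:+ (FreeGroup.mk x * g).toWord ∧
      g.toWord.length ≤ (FreeGroup.mk x * g).toWord.length + x.length := by
  induction x with
  | nil =>
    have : (FreeGroup.mk [] : FreeGroup α) = 1 := rfl
    simp [this, hs]
  | cons a x ih =>
    simp only [List.length_cons] at hl
    obtain ⟨h1, h2⟩ := ih (by omega)
    have e : FreeGroup.mk (a :: x) * g = FreeGroup.mk [a] * (FreeGroup.mk x * g) := by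
      rw [← mul_assoc, FreeGroup.mul_mk]; rfl
    set h := FreeGroup.mk x * g with hh
    have e2 : (FreeGroup.mk [a] * h).toWord = FreeGroup.reduce (a :: h.toWord) := by
      conv_lhs => rw [← FreeGroup.mk_toWord (x := h), FreeGroup.mul_mk, FreeGroup.toWord_mk]
      rfl
    rw [e, e2, FreeGroup.reduce.cons, FreeGroup.reduce_toWord]
    rcases hw : h.toWord with _ | ⟨b, t⟩
    · rw [hw] at h2
      simp only [List.length_nil] at h2
      omega
    · rw [hw] at h1 h2
      simp only [List.length_cons] at h2 ⊢
      split_ifs with hc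
      · refine ⟨?_, by omega⟩
        rcases List.suffix_cons_iff.1 h1 with h3 | h3
        · have := congrArg List.length h3
          simp only [List.length_cons] at this
          omega
        · exact h3
      · exact ⟨h1.trans (List.suffix_cons _ _), by simp only [List.length_cons]; omega⟩

theorem invRev_suffix_iff {β : Type*} (p w : List (β × Bool)) :
    FreeGroup.invRev p <:+ FreeGroup.invRev w ↔ p <+: w := by
  have key : ∀ p w : List (β × Bool), p <+: w →
      FreeGroup.invRev p <:+ FreeGroup.invRev w := by
    rintro p _ ⟨t, rfl⟩
    exact ⟨FreeGroup.invRev t, by simp⟩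
  refine ⟨?_, key p w⟩
  rintro ⟨t, ht⟩
  refine ⟨FreeGroup.invRev t, ?_⟩
  apply FreeGroup.invRev_injective
  simpa using ht

theorem prefix_mul (p : List (α × Bool)) (g x : FreeGroup α) (hp : p <+: g.toWord)
    (hl : x.norm + p.length ≤ g.norm) : p <+: (g * x).toWord := by
  have := (suffix_mk_mul (FreeGroup.invRev p) x⁻¹.toWord g⁻¹
    (by rw [FreeGroup.toWord_inv, invRev_suffix_iff]; exact hp)
    (by simpa [FreeGroup.norm] using hl)).1
  rwa [FreeGroup.mk_toWord, ← mul_inv_rev, FreeGroup.toWord_inv, invRev_suffix_iff] at this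

/-- The geodesic joining a point `g` of the cone at `p` to a point `h` outside it passes
through `p`. -/
theorem norm_le_of_crossing (p : List (α × Bool)) (g h : FreeGroup α) (hg : p <+: g.toWord)
    (hh : ¬ p <+: h.toWord) :
    (g⁻¹ * FreeGroup.mk p).norm ≤ (g⁻¹ * h).norm := by
  have h1 : g.norm < (g⁻¹ * h).norm + p.length := by
    by_contra! hc
    exact hh (by simpa using prefix_mul p g (g⁻¹ * h) hg hc)
  obtain ⟨t, ht⟩ := hg
  have h2 : g⁻¹ * FreeGroup.mk p = (FreeGroup.mk t)⁻¹ := by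
    have : g = FreeGroup.mk p * FreeGroup.mk t := by
      rw [FreeGroup.mul_mk, ht, FreeGroup.mk_toWord]
    rw [this]; group
  have h3 : (FreeGroup.mk t).norm ≤ t.length := FreeGroup.norm_mk_le
  have h4 := congrArg List.length ht
  rw [List.length_append] at h4
  rw [h2, FreeGroup.norm_inv_eq]
  simp only [FreeGroup.norm] at *
  omega

/-! ### Metric properties of endomorphisms -/

theorem norm_map_mk_le (φ : FreeGroup α →* FreeGroup α) (L : ℕ)
    (hL : ∀ a, (φ (FreeGroup.mk [a])).norm ≤ L) (x : List (α × Bool)) :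
    (φ (FreeGroup.mk x)).norm ≤ L * x.length := by
  induction x with
  | nil =>
    have : (FreeGroup.mk [] : FreeGroup α) = 1 := rfl
    simp [this]
  | cons a x ih =>
    have e : FreeGroup.mk (a :: x) = FreeGroup.mk [a] * FreeGroup.mk x := by
      rw [FreeGroup.mul_mk]; rfl
    rw [e, map_mul, List.length_cons, Nat.mul_succ]
    have := FreeGroup.norm_mul_le (φ (FreeGroup.mk [a])) (φ (FreeGroup.mk x))
    have := hL a
    omega

theorem norm_map_le (φ : FreeGroup α →* FreeGroup α) (L : ℕ)
    (hL : ∀ a, (φ (FreeGroup.mk [a])).norm ≤ L) (g : FreeGroup α) :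
    (φ g).norm ≤ L * g.norm := by
  simpa [FreeGroup.mk_toWord, FreeGroup.norm] using norm_map_mk_le φ L hL g.toWord

/-- An injective endomorphism of a finitely generated free group is a proper map. -/
theorem exists_preimage_bound [Finite α] (φ : FreeGroup α →* FreeGroup α)
    (hφ : Function.Injective φ) (R : ℕ) : ∃ M : ℕ, ∀ g, (φ g).norm ≤ R → g.norm ≤ M := by
  have h1 : {g : FreeGroup α | g.norm ≤ R}.Finite :=
    (List.finite_length_le (α × Bool) R).preimage FreeGroup.toWord_injective.injOn
  have h2 : {g : FreeGroup α | (φ g).norm ≤ R}.Finite := h1.preimage hφ.injOn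
  obtain ⟨M, hM⟩ := (h2.image FreeGroup.norm).bddAbove
  exact ⟨M, fun g hg => hM ⟨g, hg, rfl⟩⟩

/-! ### Prefix paths -/

/-- The element represented by the first `j` letters of the reduced word of `u`. -/
def initSeg (u : FreeGroup α) (j : ℕ) : FreeGroup α := FreeGroup.mk (u.toWord.take j)

theorem initSeg_mul (u : FreeGroup α) {j l : ℕ} (h : j ≤ l) :
    initSeg u l = initSeg u j * FreeGroup.mk ((u.toWord.take l).drop j) := by
  rw [initSeg, initSeg, FreeGroup.mul_mk]
  congr 1
  conv_lhs => rw [← List.take_append_drop j (u.toWord.take l)]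
  rw [List.take_take, min_eq_left h]

theorem norm_initSeg_inv_mul_le (u : FreeGroup α) {j l : ℕ} (h : j ≤ l) :
    ((initSeg u j)⁻¹ * initSeg u l).norm ≤ l - j := by
  rw [initSeg_mul u h, inv_mul_cancel_left]
  refine FreeGroup.norm_mk_le.trans ?_
  simp only [List.length_drop, List.length_take]
  omega

theorem initSeg_of_norm_le (u : FreeGroup α) {j : ℕ} (h : u.norm ≤ j) : initSeg u j = u := by
  rw [initSeg, List.take_of_length_le h, FreeGroup.mk_toWord]

theorem initSeg_zero (u : FreeGroup α) : initSeg u 0 = 1 := rfl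

/-- Prefixes of a reduced word form a geodesic. -/
theorem le_norm_initSeg_inv_mul (u : FreeGroup α) {j l : ℕ} (h : j ≤ l) (hl : l ≤ u.norm) :
    l - j ≤ ((initSeg u j)⁻¹ * initSeg u l).norm := by
  -- `u` has length at most `j + |u_j⁻¹ u_l| + (|u| - l)`.
  have h1 := norm_initSeg_inv_mul_le u (Nat.zero_le j)
  have h2 := norm_initSeg_inv_mul_le u hl
  have e : u = ((initSeg u 0)⁻¹ * initSeg u j) * (((initSeg u j)⁻¹ * initSeg u l) *
      ((initSeg u l)⁻¹ * initSeg u u.norm)) := by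
    rw [initSeg_of_norm_le u le_rfl, initSeg_zero]; group
  have h3 := FreeGroup.norm_mul_le ((initSeg u 0)⁻¹ * initSeg u j)
    (((initSeg u j)⁻¹ * initSeg u l) * ((initSeg u l)⁻¹ * initSeg u u.norm))
  have h4 := FreeGroup.norm_mul_le ((initSeg u j)⁻¹ * initSeg u l)
    ((initSeg u l)⁻¹ * initSeg u u.norm)
  rw [← e] at h3
  omega

/-- A discrete intermediate value principle. -/
theorem exists_crossing (Q : ℕ → Prop) {a b : ℕ} (hab : a ≤ b) (ha : Q a) (hb : ¬ Q b) :
    ∃ j, a ≤ j ∧ j < b ∧ Q j ∧ ¬ Q (j + 1) := by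
  induction b, hab using Nat.le_induction with
  | base => exact absurd ha hb
  | succ b hab ih =>
    by_cases h : Q b
    · exact ⟨b, hab, b.lt_succ_self, h, hb⟩
    · obtain ⟨j, h1, h2, h3⟩ := ih h
      exact ⟨j, h1, by omega, h3⟩

/-- If `W_i` is the longest common prefix of `W` and a fixed element `u`, then `φ` moves `W_i`
forward along `W` by at most a constant that does not depend on `u`. -/
theorem wedgeF_map_le (φ : FreeGroup α →* FreeGroup α) (W : InfWord α) (L M : ℕ)
    (hL : ∀ a, (φ (FreeGroup.mk [a])).norm ≤ L)
    (hM : ∀ g, (φ g).norm ≤ 2 * L → g.norm ≤ M) (u : FreeGroup α) (hu : φ u = u) :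
    wedgeF W (φ (wordPrefix W (wedgeF W u))) ≤ wedgeF W u + 1 + L + L * M := by
  set i := wedgeF W u with hi
  by_contra! hlt
  have hpre : prefixList W i <+: u.toWord := (le_wedgeF_iff W u i).1 le_rfl
  have hin : i ≤ u.norm := by simpa [prefixList_length, FreeGroup.norm] using hpre.length_le
  have hseg : initSeg u i = wordPrefix W i := by
    have := List.prefix_iff_eq_take.1 hpre
    rw [prefixList_length] at this
    rw [initSeg, wordPrefix, ← this]
  set p := prefixList W (i + 1) with hp
  have hplen : p.length = i + 1 := prefixList_length _ _
  have h0 : ¬ p <+: (φ (initSeg u 0)).toWord := by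
    intro h
    have := h.length_le
    simp [initSeg_zero, hplen] at this
  have hmid : p <+: (φ (initSeg u i)).toWord := by
    rw [hseg, ← le_wedgeF_iff]; omega
  have hend : ¬ p <+: (φ (initSeg u u.norm)).toWord := by
    rw [initSeg_of_norm_le u le_rfl, hu, ← le_wedgeF_iff]; omega
  have hstep : ∀ {j l : ℕ}, j ≤ l →
      ((φ (initSeg u j))⁻¹ * φ (initSeg u l)).norm ≤ L * (l - j) := by
    intro j l hjl
    rw [← map_inv, ← map_mul]
    exact (norm_map_le φ L hL _).trans (Nat.mul_le_mul_left _ (norm_initSeg_inv_mul_le u hjl))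
  have hsymm : ∀ g h : FreeGroup α, (g⁻¹ * h).norm = (h⁻¹ * g).norm := by
    intro g h
    rw [← FreeGroup.norm_inv_eq]; simp
  have htri : ∀ a b c : FreeGroup α, (a⁻¹ * c).norm ≤ (a⁻¹ * b).norm + (b⁻¹ * c).norm := by
    intro a b c
    simpa [mul_assoc] using FreeGroup.norm_mul_le (a⁻¹ * b) (b⁻¹ * c)
  -- The path leaves the cone at some time `j ≥ i`.
  obtain ⟨j, hij, hjn, hj, hj'⟩ :=
    exists_crossing (fun j => p <+: (φ (initSeg u j)).toWord) hin hmid hend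
  -- It has entered the cone at some time `k + 1 ≤ i`.
  obtain ⟨k, -, hki, hk', hk⟩ :=
    exists_crossing (fun j => ¬ p <+: (φ (initSeg u j)).toWord) (Nat.zero_le i) h0
      (not_not.2 hmid)
  have hk := not_not.1 hk
  have dj : ((φ (initSeg u j))⁻¹ * FreeGroup.mk p).norm ≤ L := by
    refine (norm_le_of_crossing p _ _ hj hj').trans ((hstep j.le_succ).trans ?_)
    simp
  have dk : ((φ (initSeg u (k + 1)))⁻¹ * FreeGroup.mk p).norm ≤ L := by
    refine (norm_le_of_crossing p _ _ hk hk').trans ?_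
    rw [hsymm]
    refine (hstep k.le_succ).trans ?_
    simp
  have hjk : j - (k + 1) ≤ M := by
    refine (le_norm_initSeg_inv_mul u (by omega) hjn.le).trans (hM _ ?_)
    rw [map_mul, map_inv]
    have := htri (φ (initSeg u (k + 1))) (FreeGroup.mk p) (φ (initSeg u j))
    rw [hsymm (FreeGroup.mk p)] at this
    omega
  have hki' : ((φ (initSeg u (k + 1)))⁻¹ * φ (initSeg u i)).norm ≤ L * M :=
    (hstep (by omega)).trans (Nat.mul_le_mul_left _ (by omega))
  have hP : (φ (initSeg u i)).norm ≤ i + 1 + L + L * M := by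
    have t1 := FreeGroup.norm_mul_le (FreeGroup.mk p) ((FreeGroup.mk p)⁻¹ * φ (initSeg u i))
    rw [mul_inv_cancel_left] at t1
    have t2 := htri (FreeGroup.mk p) (φ (initSeg u (k + 1))) (φ (initSeg u i))
    rw [hsymm (FreeGroup.mk p) (φ (initSeg u (k + 1)))] at t2
    have t3 : (FreeGroup.mk p).norm ≤ p.length := FreeGroup.norm_mk_le
    omega
  have hw := ((le_wedgeF_iff W (φ (initSeg u i)) _).1 le_rfl).length_le
  rw [prefixList_length, hseg] at hw
  rw [hseg] at hP
  simp only [FreeGroup.norm] at hP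
  omega

/-- part of Proposition 2.3: an attracting fixed word of `φ` is not a
limit of elements of `fix(φ)`: `|W ∧ u|` is uniformly bounded over `u ∈ fix(φ)`. -/
theorem stmt6 {n : ℕ} (φ : FreeGroup (Fin n) →* FreeGroup (Fin n))
    (hφ : Function.Injective φ) (W : InfWord (Fin n))
    (hW : IsAttractingFixedWord φ W) :
    ∃ B : ℕ, ∀ u ∈ fixedSubgroup φ, wedgeF W u ≤ B := by
  obtain ⟨L, hL⟩ := (Set.finite_range
    fun a : Letter (Fin n) => (φ (FreeGroup.mk [a])).norm).bddAbove
  obtain ⟨M, hM⟩ := exists_preimage_bound φ hφ (2 * L)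
  obtain ⟨i₀, hi₀⟩ := eventually_atTop.1 (hW.2.eventually_ge_atTop ((1 + L + L * M + 1 : ℕ) : ℤ))
  refine ⟨i₀, fun u hu => ?_⟩
  by_contra! hlt
  have h1 := wedgeF_map_le φ W L M (fun a => hL ⟨a, rfl⟩) hM u hu
  have h2 := hi₀ _ hlt.le
  omega

end ZZFix
end
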